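/- arXiv:2106.09615 — 2 statements merged into one kernel-verified Lean document; each statement's English description precedes it below -/
import Mathlib

section
/- There exist absolute constants c > 0, K ≥ 1 and c0 > 0 such that for every finite set A ⊆ ℝ, one has max{ Sid^×_K(A), Sid^×_K(A+1) } ≥ c0·|A|^{1/2 + c}, where A + 1 = {a + 1 : a ∈ A}. -/
open scoped BigOperators

/-- The number of pairs `(x, y) ∈ S × S` with `x = lam * y`. -/
noncomputable def mulPairCount {F : Type*} [Mul F] (lam : F) (S : Finset F) : ℕ :=
  Set.ncard {q : F × F | q.1 ∈ S ∧ q.2 ∈ S ∧ q.1 = lam * q.2}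

/-- `S` is multiplicatively `K`-Sidon: for every `lam ≠ 1` the number of pairs
`(x, y) ∈ S × S` with `x = lam * y` is at most `K`. -/
def IsMulSidon {F : Type*} [MulOneClass F] (K : ℝ) (S : Finset F) : Prop :=
  ∀ lam : F, lam ≠ 1 → (mulPairCount lam S : ℝ) ≤ K

/-- Number of `x ∈ B` with `l * x ∈ B`. -/
noncomputable def rep (B : Finset ℝ) (l : ℝ) : ℕ := (B.filter (fun x => l * x ∈ B)).card

lemma prob_sum (B D : Finset ℝ) (p : ℝ) (hD : D ⊆ B) :
    ∑ S ∈ B.powerset, p ^ S.card * (1 - p) ^ (B \ S).card * (if D ⊆ S then (1 : ℝ) else 0)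
      = p ^ D.card := by
  have h := Finset.prod_add (fun _ : ℝ => p) (fun i => if i ∈ D then (0 : ℝ) else 1 - p) B
  have h1 : ∏ i ∈ B, (p + (if i ∈ D then (0 : ℝ) else 1 - p)) = p ^ D.card := by
    rw [← Finset.prod_sdiff hD]
    rw [Finset.prod_congr rfl (g := fun _ => (1 : ℝ)), Finset.prod_congr (s₁ := D) rfl (g := fun _ => p)]
    · simp
    · intro x hx; simp [hx]
    · intro x hx; simp [(Finset.mem_sdiff.mp hx).2]
  rw [← h1, h]
  apply Finset.sum_congr rfl
  intro S hS
  rw [Finset.mem_powerset] at hS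
  rw [Finset.prod_const, mul_assoc]
  congr 1
  split_ifs with hDS
  · rw [Finset.prod_congr rfl (g := fun _ => 1 - p)]
    · simp
    · intro x hx
      have : x ∉ D := fun h => (Finset.mem_sdiff.mp hx).2 (hDS h)
      simp [this]
  · rw [Finset.not_subset] at hDS
    obtain ⟨x, hx, hxS⟩ := hDS
    rw [mul_zero, eq_comm]
    apply Finset.prod_eq_zero (i := x)
    · exact Finset.mem_sdiff.mpr ⟨hD hx, hxS⟩
    · simp [hx]

lemma deletion (B : Finset ℝ) (E : Finset (Finset ℝ)) (hE : ∀ D ∈ E, D ⊆ B ∧ D.Nonempty)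
    (p : ℝ) (hp0 : 0 ≤ p) (hp1 : p ≤ 1) :
    ∃ S ⊆ B, (∀ D ∈ E, ¬ D ⊆ S) ∧ p * B.card - ∑ D ∈ E, p ^ D.card ≤ S.card := by
  classical
  set w : Finset ℝ → ℝ := fun S => p ^ S.card * (1 - p) ^ (B \ S).card with hw
  have hwn : ∀ S, 0 ≤ w S := fun S => mul_nonneg (pow_nonneg hp0 _) (pow_nonneg (by linarith) _)
  set F : Finset ℝ → ℝ := fun S => (∑ b ∈ B, if {b} ⊆ S then (1 : ℝ) else 0)
    - ∑ D ∈ E, if D ⊆ S then (1 : ℝ) else 0 with hF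
  have hsum : ∑ S ∈ B.powerset, w S * F S = p * B.card - ∑ D ∈ E, p ^ D.card := by
    simp only [hF, mul_sub, Finset.sum_sub_distrib, Finset.mul_sum]
    rw [Finset.sum_comm, Finset.sum_comm (s := B.powerset) (t := E)]
    congr 1
    · rw [Finset.sum_congr rfl (g := fun _ => p)]
      · simp [mul_comm]
      · intro b hb
        rw [prob_sum B {b} p (by simpa using hb)]; simp
    · apply Finset.sum_congr rfl
      intro D hD
      exact prob_sum B D p (hE D hD).1
  have hone : ∑ S ∈ B.powerset, w S = 1 := by
    have := prob_sum B ∅ p (by simp)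
    simpa using this
  obtain ⟨S, hS, hSF⟩ : ∃ S ∈ B.powerset, p * B.card - ∑ D ∈ E, p ^ D.card ≤ F S := by
    by_contra! hcon
    set X := p * B.card - ∑ D ∈ E, p ^ D.card
    have h1 : ∑ S ∈ B.powerset, w S * (X - F S) = 0 := by
      simp only [mul_sub, Finset.sum_sub_distrib, hsum, ← Finset.sum_mul, hone]; ring
    have h2 := (Finset.sum_eq_zero_iff_of_nonneg
      (fun S hS => mul_nonneg (hwn S) (by linarith [hcon S hS]))).mp h1
    have h3 : ∑ S ∈ B.powerset, w S = 0 := by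
      apply Finset.sum_eq_zero
      intro S hS
      rcases mul_eq_zero.mp (h2 S hS) with h | h
      · exact h
      · linarith [hcon S hS]
    linarith
  rw [Finset.mem_powerset] at hS
  have hch : ∀ D : Finset ℝ, ∃ x, D ∈ E → x ∈ D := by
    intro D
    by_cases h : D ∈ E
    · obtain ⟨x, hx⟩ := (hE D h).2
      exact ⟨x, fun _ => hx⟩
    · exact ⟨0, fun h' => absurd h' h⟩
  choose g hg using hch
  set V := E.filter (fun D => D ⊆ S)
  refine ⟨S \ V.image g, Finset.sdiff_subset.trans hS, ?_, ?_⟩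
  · intro D hD hsub
    have hV : D ∈ V := Finset.mem_filter.mpr ⟨hD, hsub.trans Finset.sdiff_subset⟩
    have := hsub (hg D hD)
    exact (Finset.mem_sdiff.mp this).2 (Finset.mem_image_of_mem g hV)
  · have h1 : S.card ≤ (S \ V.image g).card + V.card := by
      have := Finset.le_card_sdiff (V.image g) S
      have h2 := Finset.card_image_le (s := V) (f := g)
      omega
    have h2 : F S = (S.card : ℝ) - V.card := by
      simp only [hF]
      congr 1
      · rw [← Finset.sum_filter]
        simp only [Finset.singleton_subset_iff, Finset.sum_const, nsmul_eq_mul, mul_one]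
        congr 2
        ext x; simp only [Finset.mem_filter]; exact ⟨fun h => h.2, fun h => ⟨hS h, h⟩⟩
      · rw [← Finset.sum_filter]; simp [V]
    have h3 : (S.card : ℝ) ≤ (S \ V.image g).card + V.card := by exact_mod_cast h1
    linarith

lemma exists_disjoint (X : Finset ℝ) (l : ℝ) (hl1 : l ≠ 1) (hl0 : l ≠ 0) (h0 : (0 : ℝ) ∉ X) (k : ℕ)
    (hX : 3 * k ≤ X.card) : ∃ D ⊆ X, D.card = k ∧ Disjoint D (D.image (fun x => l * x)) := by
  classical
  set P := X.powerset.filter (fun D => Disjoint D (D.image (fun x => l * x)))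
  have hP : P.Nonempty := ⟨∅, by simp [P]⟩
  obtain ⟨D, hDP, hmax⟩ := Finset.exists_max_image P Finset.card hP
  obtain ⟨hDX, hDd⟩ : D ⊆ X ∧ Disjoint D (D.image (fun x => l * x)) := by
    simpa [P] using hDP
  have hcov : X ⊆ D ∪ (D.image (fun x => l * x) ∪ D.image (fun x => l⁻¹ * x)) := by
    intro x hx
    by_contra hcon
    simp only [Finset.mem_union, not_or] at hcon
    obtain ⟨h1, h2, h3⟩ := hcon
    have hx0 : x ≠ 0 := fun h => h0 (h ▸ hx)
    have hins : insert x D ∈ P := by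
      simp only [P, Finset.mem_filter, Finset.mem_powerset]
      refine ⟨Finset.insert_subset hx hDX, ?_⟩
      rw [Finset.image_insert, Finset.disjoint_insert_left, Finset.disjoint_insert_right]
      refine ⟨?_, ?_, hDd⟩
      · rw [Finset.mem_insert, not_or]
        refine ⟨?_, h2⟩
        intro h
        apply hl1
        have : (l - 1) * x = 0 := by linarith
        rcases mul_eq_zero.mp this with h | h
        · linarith
        · exact absurd h hx0
      · intro h
        apply h3
        rw [Finset.mem_image]
        exact ⟨l * x, h, by field_simp⟩
    have := hmax _ hins
    rw [Finset.card_insert_of_notMem h1] at this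
    omega
  have hc := Finset.card_le_card hcov
  have h1 := Finset.card_union_le D (D.image (fun x => l * x) ∪ D.image (fun x => l⁻¹ * x))
  have h2 := Finset.card_union_le (D.image (fun x => l * x)) (D.image (fun x => l⁻¹ * x))
  have h3 := Finset.card_image_le (s := D) (f := fun x => l * x)
  have h4 := Finset.card_image_le (s := D) (f := fun x => l⁻¹ * x)
  obtain ⟨D', hD', hcard⟩ := Finset.exists_subset_card_eq (s := D) (n := k) (by omega)
  exact ⟨D', hD'.trans hDX, hcard,
    Finset.disjoint_of_subset_left hD' (Finset.disjoint_of_subset_right (Finset.image_subset_image hD') hDd)⟩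

lemma mulPairCount_le (S : Finset ℝ) (l : ℝ) : mulPairCount l S ≤ rep S l := by
  classical
  unfold mulPairCount rep
  rw [← Set.ncard_coe_finset]
  apply Set.ncard_le_ncard_of_injOn (fun q => q.2)
  · rintro ⟨a, b⟩ ⟨h1, h2, h3⟩
    simp only at h1 h2 h3
    simp only [Finset.coe_filter, Set.mem_ofPred_eq]
    exact ⟨h2, h3 ▸ h1⟩
  · rintro ⟨a, b⟩ ⟨h1, h2, h3⟩ ⟨a', b'⟩ ⟨h1', h2', h3'⟩ h
    simp only at h h3 h3'
    subst h; subst h3; subst h3'; rfl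

noncomputable def popSet (B : Finset ℝ) (M : ℝ) : Finset ℝ := by
  classical
  exact ((B ×ˢ B).image (fun q => q.1 / q.2)).filter (fun l => l ≠ 1 ∧ M ≤ rep B l)

lemma sidon_of_small (B : Finset ℝ) (h0 : (0 : ℝ) ∉ B) (p M : ℝ) (k : ℕ) (hk : 1 ≤ k)
    (hp0 : 0 ≤ p) (hp1 : p ≤ 1) (hM : 0 ≤ M)
    (h1 : p ^ 2 * ∑ l ∈ popSet B M, (rep B l : ℝ) ≤ p * B.card / 4)
    (h2 : p ^ (2 * k) * ((B.card : ℝ) ^ 2 * M ^ k) ≤ p * B.card / 4) :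
    ∃ S ⊆ B, IsMulSidon (3 * k : ℝ) S ∧ p * B.card / 2 ≤ S.card := by
  classical
  set R := (B ×ˢ B).image (fun q => q.1 / q.2) with hR
  set X : ℝ → Finset ℝ := fun l => B.filter (fun x => l * x ∈ B) with hX
  set E2 : Finset (Finset ℝ) := (popSet B M).biUnion
    (fun l => (X l).image (fun x => {x, l * x})) with hE2
  set Ek : Finset (Finset ℝ) := (R.filter (fun l => l ≠ 1 ∧ (rep B l : ℝ) < M)).biUnion
    (fun l => (((X l).powersetCard k).filter (fun D => Disjoint D (D.image (fun x => l * x)))).image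
      (fun D => D ∪ D.image (fun x => l * x))) with hEk
  have hpop : ∀ l, l ∈ popSet B M ↔ l ∈ R ∧ l ≠ 1 ∧ M ≤ rep B l := by
    intro l; simp only [popSet, Finset.mem_filter, hR]
  have hR0 : ∀ l ∈ R, l ≠ 0 := by
    intro l hl
    simp only [hR, Finset.mem_image, Finset.mem_product] at hl
    obtain ⟨⟨a, b⟩, ⟨ha, hb⟩, rfl⟩ := hl
    simp only at ha hb ⊢
    exact div_ne_zero (fun h => h0 (h ▸ ha)) (fun h => h0 (h ▸ hb))
  have hc2 : (E2.card : ℝ) ≤ ∑ l ∈ popSet B M, (rep B l : ℝ) := by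
    have : E2.card ≤ ∑ l ∈ popSet B M, rep B l :=
      Finset.card_biUnion_le.trans (Finset.sum_le_sum (fun l _ => Finset.card_image_le))
    exact_mod_cast this
  have hck : (Ek.card : ℝ) ≤ (B.card : ℝ) ^ 2 * M ^ k := by
    have h1 : (Ek.card : ℝ) ≤ ∑ l ∈ R.filter (fun l => l ≠ 1 ∧ (rep B l : ℝ) < M), M ^ k := by
      refine le_trans (Nat.cast_le.mpr Finset.card_biUnion_le) ?_
      rw [Nat.cast_sum]
      apply Finset.sum_le_sum
      intro l hl
      rw [Finset.mem_filter] at hl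
      refine le_trans (Nat.cast_le.mpr (Finset.card_image_le.trans
        ((Finset.card_filter_le _ _).trans
        ((Finset.card_powersetCard k (X l)).le.trans (Nat.choose_le_pow _ _))))) ?_
      rw [Nat.cast_pow]
      exact pow_le_pow_left₀ (by positivity) hl.2.2.le k
    rw [Finset.sum_const, nsmul_eq_mul] at h1
    refine h1.trans (mul_le_mul_of_nonneg_right ?_ (pow_nonneg hM k))
    have : (R.filter (fun l => l ≠ 1 ∧ (rep B l : ℝ) < M)).card ≤ B.card ^ 2 := by
      refine (Finset.card_filter_le _ _).trans (Finset.card_image_le.trans ?_)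
      rw [Finset.card_product, sq]
    exact_mod_cast this
  have hX0 : ∀ l, ∀ x ∈ X l, x ∈ B ∧ l * x ∈ B ∧ x ≠ 0 := by
    intro l x hx
    simp only [hX, Finset.mem_filter] at hx
    exact ⟨hx.1, hx.2, fun h => h0 (h ▸ hx.1)⟩
  have hm2 : ∀ D ∈ E2, (D ⊆ B ∧ D.Nonempty) ∧ D.card = 2 := by
    intro D hD
    simp only [hE2, Finset.mem_biUnion, Finset.mem_image] at hD
    obtain ⟨l, hl, x, hx, rfl⟩ := hD
    obtain ⟨ha, hb, hc⟩ := hX0 l x hx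
    refine ⟨⟨?_, by simp⟩, ?_⟩
    · intro y hy
      simp only [Finset.mem_insert, Finset.mem_singleton] at hy
      rcases hy with rfl | rfl <;> assumption
    · apply Finset.card_pair
      intro h
      have : (l - 1) * x = 0 := by linarith
      rcases mul_eq_zero.mp this with h | h
      · exact ((hpop l).mp hl).2.1 (by linarith)
      · exact hc h
  have hmk : ∀ D ∈ Ek, (D ⊆ B ∧ D.Nonempty) ∧ D.card = 2 * k := by
    intro D hD
    simp only [hEk, Finset.mem_biUnion, Finset.mem_image, Finset.mem_filter,
      Finset.mem_powersetCard] at hD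
    obtain ⟨l, ⟨hl, hl1, hlM⟩, D0, ⟨⟨hD0, hD0c⟩, hdis⟩, rfl⟩ := hD
    have hcard : (D0 ∪ D0.image (fun x => l * x)).card = 2 * k := by
      rw [Finset.card_union_of_disjoint hdis, Finset.card_image_of_injective, hD0c]
      · ring
      · exact mul_right_injective₀ (hR0 l hl)
    refine ⟨⟨?_, ?_⟩, hcard⟩
    · apply Finset.union_subset
      · exact fun y hy => (hX0 l y (hD0 hy)).1
      · intro y hy
        rw [Finset.mem_image] at hy
        obtain ⟨x, hx, rfl⟩ := hy
        exact (hX0 l x (hD0 hx)).2.1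
    · rw [← Finset.card_pos, hcard]; omega
  obtain ⟨S, hSB, hSE, hSc⟩ := deletion B (E2 ∪ Ek) (by
    intro D hD
    rcases Finset.mem_union.mp hD with h | h
    · exact (hm2 D h).1
    · exact (hmk D h).1) p hp0 hp1
  refine ⟨S, hSB, ?_, ?_⟩
  · intro l hl
    have hle := mulPairCount_le S l
    have : rep S l ≤ 3 * k := by
      by_contra! hcon
      unfold rep at hcon
      set XS := S.filter (fun x => l * x ∈ S) with hXS
      have hXSX : XS ⊆ X l := by
        intro x hx
        simp only [hXS, Finset.mem_filter] at hx
        simp only [hX, Finset.mem_filter]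
        exact ⟨hSB hx.1, hSB hx.2⟩
      have hne : XS.Nonempty := by rw [← Finset.card_pos]; omega
      obtain ⟨x, hx⟩ := hne
      have hxX := hX0 l x (hXSX hx)
      have hlR : l ∈ R := by
        simp only [hR, Finset.mem_image, Finset.mem_product]
        exact ⟨(l * x, x), ⟨hxX.2.1, hxX.1⟩, by field_simp [hxX.2.2]⟩
      by_cases hM' : M ≤ rep B l
      · refine hSE {x, l * x} (Finset.mem_union_left _ ?_) ?_
        · simp only [hE2, Finset.mem_biUnion, Finset.mem_image]
          exact ⟨l, (hpop l).mpr ⟨hlR, hl, hM'⟩, x, hXSX hx, rfl⟩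
        · simp only [hXS, Finset.mem_filter] at hx
          intro y hy
          simp only [Finset.mem_insert, Finset.mem_singleton] at hy
          rcases hy with rfl | rfl
          · exact hx.1
          · exact hx.2
      · push Not at hM'
        obtain ⟨D, hDX, hDc, hDd⟩ := exists_disjoint XS l hl (hR0 l hlR)
          (fun h => (hX0 l 0 (hXSX h)).2.2 rfl) k hcon.le
        refine hSE (D ∪ D.image (fun x => l * x)) (Finset.mem_union_right _ ?_) ?_
        · simp only [hEk, Finset.mem_biUnion, Finset.mem_image, Finset.mem_filter,
            Finset.mem_powersetCard]
          exact ⟨l, ⟨hlR, hl, hM'⟩, D, ⟨⟨hDX.trans hXSX, hDc⟩, hDd⟩, rfl⟩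
        · apply Finset.union_subset
          · exact hDX.trans (Finset.filter_subset _ _)
          · intro y hy
            rw [Finset.mem_image] at hy
            obtain ⟨x, hx, rfl⟩ := hy
            exact (Finset.mem_filter.mp (hDX hx)).2
    exact_mod_cast hle.trans this
  · have hs : ∑ D ∈ E2 ∪ Ek, p ^ D.card ≤ p ^ 2 * E2.card + p ^ (2 * k) * Ek.card := by
      have hsplit : ∑ D ∈ E2 ∪ Ek, p ^ D.card ≤ ∑ D ∈ E2, p ^ D.card + ∑ D ∈ Ek, p ^ D.card := by
        rw [← Finset.sum_union_inter]
        have : 0 ≤ ∑ D ∈ E2 ∩ Ek, p ^ D.card := Finset.sum_nonneg (fun _ _ => pow_nonneg hp0 _)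
        linarith
      refine hsplit.trans (le_of_eq ?_)
      rw [Finset.sum_congr rfl (fun D hD => by rw [(hm2 D hD).2]),
        Finset.sum_congr (s₁ := Ek) rfl (fun D hD => by rw [(hmk D hD).2])]
      simp [mul_comm]
    have ha : p ^ 2 * E2.card ≤ p * B.card / 4 :=
      (mul_le_mul_of_nonneg_left hc2 (by positivity)).trans h1
    have hb : p ^ (2 * k) * Ek.card ≤ p * B.card / 4 :=
      (mul_le_mul_of_nonneg_left hck (by positivity)).trans h2
    linarith

noncomputable def rnk (P : Finset ℝ) (x : ℝ) : ℕ := (P.filter (fun y => y < x)).card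

lemma rnk_mono (P : Finset ℝ) {x y : ℝ} (h : x ≤ y) : rnk P x ≤ rnk P y := by
  apply Finset.card_le_card
  intro z hz
  simp only [Finset.mem_filter] at hz ⊢
  exact ⟨hz.1, lt_of_lt_of_le hz.2 h⟩

lemma rnk_strict (P : Finset ℝ) {x y : ℝ} (hx : x ∈ P) (h : x < y) : rnk P x < rnk P y := by
  apply Finset.card_lt_card
  rw [Finset.ssubset_iff_of_subset]
  · exact ⟨x, by simp [hx, h], by simp⟩
  · intro z hz
    simp only [Finset.mem_filter] at hz ⊢
    exact ⟨hz.1, hz.2.trans h⟩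

lemma rnk_inj (P : Finset ℝ) : Set.InjOn (rnk P) P := by
  intro x hx y hy h
  rcases lt_trichotomy x y with h1 | h1 | h1
  · have := rnk_strict P hx h1; omega
  · exact h1
  · have := rnk_strict P hy h1; omega

lemma rnk_lt (P : Finset ℝ) {x : ℝ} (hx : x ∈ P) : rnk P x < P.card := by
  apply Finset.card_lt_card
  rw [Finset.ssubset_iff_of_subset (Finset.filter_subset _ _)]
  exact ⟨x, hx, by simp⟩

lemma block_pairs (P : Finset ℝ) (w : ℕ) (hw : 0 < w) :
    ((P ×ˢ P).filter (fun q => rnk P q.1 / w = rnk P q.2 / w)).card ≤ P.card * w := by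
  classical
  have h : ((P ×ˢ P).filter (fun q => rnk P q.1 / w = rnk P q.2 / w)).card ≤ (P ×ˢ Finset.range w).card := by
    apply Finset.card_le_card_of_injOn (fun q => (q.1, rnk P q.2 % w))
    · rintro ⟨a, b⟩ hq
      simp only [Finset.coe_filter, Finset.mem_product, Set.mem_ofPred_eq] at hq
      simp only [Finset.coe_product, Set.mem_prod, Finset.mem_coe, Finset.mem_range]
      exact ⟨hq.1.1, Nat.mod_lt _ hw⟩
    · rintro ⟨a, b⟩ hq ⟨a', b'⟩ hq' heq
      simp only [Finset.coe_filter, Finset.mem_product, Set.mem_ofPred_eq] at hq hq'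
      simp only [Prod.mk.injEq] at heq
      obtain ⟨rfl, h2⟩ := heq
      have : rnk P b = rnk P b' := by
        rw [← Nat.div_add_mod (rnk P b) w, ← Nat.div_add_mod (rnk P b') w, ← hq.2, ← hq'.2, h2]
      rw [rnk_inj P hq.1.2 hq'.1.2 this]
  simpa using h

/-- points of the line `y = s x + t` in `P × Q`, by their first coordinate -/
noncomputable def lpts (P Q : Finset ℝ) (l : ℝ × ℝ) : Finset ℝ :=
  P.filter (fun x => l.1 * x + l.2 ∈ Q)

lemma cs_pairs {α β : Type*} [DecidableEq α] [DecidableEq β] (X : Finset α) (f : α → β) :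
    X.card ^ 2 ≤ (X.image f).card * ((X ×ˢ X).filter (fun q => f q.1 = f q.2)).card := by
  have h1 : X.card = ∑ c ∈ X.image f, (X.filter (fun x => f x = c)).card :=
    Finset.card_eq_sum_card_fiberwise (fun x hx => Finset.mem_image_of_mem f hx)
  have h2 : ((X ×ˢ X).filter (fun q => f q.1 = f q.2)).card
      = ∑ c ∈ X.image f, (X.filter (fun x => f x = c)).card ^ 2 := by
    rw [Finset.card_eq_sum_card_fiberwise (f := fun q => f q.1) (t := X.image f)]
    · apply Finset.sum_congr rfl
      intro c hc
      rw [sq, ← Finset.card_product]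
      congr 1
      ext ⟨a, b⟩
      simp only [Finset.mem_filter, Finset.mem_product]
      constructor
      · rintro ⟨⟨⟨h1, h2⟩, h3⟩, h4⟩; exact ⟨⟨h1, h4⟩, h2, h3 ▸ h4⟩
      · rintro ⟨⟨h1, h2⟩, h3, h4⟩; exact ⟨⟨⟨h1, h3⟩, h2.trans h4.symm⟩, h2⟩
    · rintro ⟨a, b⟩ hq
      simp only [Finset.coe_filter, Finset.mem_product, Set.mem_ofPred_eq] at hq
      exact Finset.mem_image_of_mem f hq.1.1
  rw [h2, h1]
  exact sq_sum_le_card_mul_sum_sq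

/-- number of cells met by a line -/
lemma cells_le (P Q : Finset ℝ) (l : ℝ × ℝ) (hl : l.1 ≠ 0) (v w a b : ℕ)
    (ha : ∀ x ∈ P, rnk P x / v ≤ a) (hb : ∀ y ∈ Q, rnk Q y / w ≤ b) :
    ((lpts P Q l).image (fun x => (rnk P x / v, rnk Q (l.1 * x + l.2) / w))).card ≤ a + b + 1 := by
  classical
  have hmem : ∀ x ∈ lpts P Q l, x ∈ P ∧ l.1 * x + l.2 ∈ Q := by
    intro x hx; simpa [lpts] using hx
  rcases lt_or_gt_of_ne hl with hneg | hpos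
  · have : ((lpts P Q l).image (fun x => (rnk P x / v, rnk Q (l.1 * x + l.2) / w))).card
        ≤ (Finset.range (a + b + 1)).card := by
      apply Finset.card_le_card_of_injOn (fun c => c.1 + (b - c.2))
      · intro c hc
        simp only [Finset.coe_image, Set.mem_image, Finset.mem_coe] at hc
        obtain ⟨x, hx, rfl⟩ := hc
        have h1 := ha x (hmem x hx).1
        simp only [Finset.coe_range, Set.mem_Iio]
        exact Nat.lt_succ_of_le (Nat.add_le_add h1 (Nat.sub_le _ _))
      · intro c hc c' hc' heq
        simp only [Finset.coe_image, Set.mem_image, Finset.mem_coe] at hc hc'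
        obtain ⟨x, hx, rfl⟩ := hc
        obtain ⟨y, hy, rfl⟩ := hc'
        simp only at heq
        have h1 := hb _ (hmem x hx).2
        have h2 := hb _ (hmem y hy).2
        rw [Prod.mk.injEq]
        rcases le_total x y with h | h
        · have e1 := Nat.div_le_div_right (c := v) (rnk_mono P h)
          have e2 := Nat.div_le_div_right (c := w) (rnk_mono Q (x := l.1 * y + l.2) (y := l.1 * x + l.2) (by nlinarith))
          omega
        · have e1 := Nat.div_le_div_right (c := v) (rnk_mono P h)
          have e2 := Nat.div_le_div_right (c := w) (rnk_mono Q (x := l.1 * x + l.2) (y := l.1 * y + l.2) (by nlinarith))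
          omega
    simpa using this
  · have : ((lpts P Q l).image (fun x => (rnk P x / v, rnk Q (l.1 * x + l.2) / w))).card
        ≤ (Finset.range (a + b + 1)).card := by
      apply Finset.card_le_card_of_injOn (fun c => c.1 + c.2)
      · intro c hc
        simp only [Finset.coe_image, Set.mem_image, Finset.mem_coe] at hc
        obtain ⟨x, hx, rfl⟩ := hc
        have h1 := ha x (hmem x hx).1
        have h2 := hb _ (hmem x hx).2
        simp only [Finset.coe_range, Set.mem_Iio]
        omega
      · intro c hc c' hc' heq
        simp only [Finset.coe_image, Set.mem_image, Finset.mem_coe] at hc hc'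
        obtain ⟨x, hx, rfl⟩ := hc
        obtain ⟨y, hy, rfl⟩ := hc'
        simp only at heq
        rw [Prod.mk.injEq]
        rcases le_total x y with h | h
        · have e1 := Nat.div_le_div_right (c := v) (rnk_mono P h)
          have e2 := Nat.div_le_div_right (c := w) (rnk_mono Q (x := l.1 * x + l.2) (y := l.1 * y + l.2) (by nlinarith))
          omega
        · have e1 := Nat.div_le_div_right (c := v) (rnk_mono P h)
          have e2 := Nat.div_le_div_right (c := w) (rnk_mono Q (x := l.1 * y + l.2) (y := l.1 * x + l.2) (by nlinarith))
          omega
    simpa using this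

/-- Szemeredi-Trotter type bound for rich lines in a grid. -/
lemma rich_lines (P Q : Finset ℝ) (p q k : ℝ) (hP : P.card ≤ p) (hQ : Q.card ≤ q) (hk : 4 ≤ k)
    (Ls : Finset (ℝ × ℝ)) (hs : ∀ l ∈ Ls, l.1 ≠ 0)
    (hrich : ∀ l ∈ Ls, k ≤ (lpts P Q l).card) :
    Ls.card * k ^ 3 ≤ 81 * p ^ 2 * q ^ 2 := by
  classical
  rcases Ls.eq_empty_or_nonempty with rfl | ⟨l0, hl0⟩
  · simp; positivity
  have hkp : k ≤ p := by
    have h1 : (lpts P Q l0).card ≤ P.card := Finset.card_filter_le _ _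
    have h2 : ((lpts P Q l0).card : ℝ) ≤ P.card := by exact_mod_cast h1
    linarith [hrich l0 hl0]
  have hkq : k ≤ q := by
    have h1 : (lpts P Q l0).card ≤ Q.card := by
      apply Finset.card_le_card_of_injOn (fun x => l0.1 * x + l0.2)
      · intro x hx
        simp only [lpts, Finset.coe_filter, Set.mem_ofPred_eq] at hx
        exact hx.2
      · intro x _ y _ h
        exact mul_left_cancel₀ (hs l0 hl0) (by simpa using h)
    have h2 : ((lpts P Q l0).card : ℝ) ≤ Q.card := by exact_mod_cast h1
    linarith [hrich l0 hl0]
  have hk0 : 0 < k := by linarith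
  have hp00 : 0 < p := by linarith
  have hq00 : 0 < q := by linarith
  set v := ⌈8 * p / k⌉₊ with hv
  set w := ⌈8 * q / k⌉₊ with hw
  have hv1 : 8 * p / k ≤ v := Nat.le_ceil _
  have hw1 : 8 * q / k ≤ w := Nat.le_ceil _
  have hv0 : 0 < v := Nat.ceil_pos.mpr (by positivity)
  have hw0 : 0 < w := Nat.ceil_pos.mpr (by positivity)
  have hv2 : (v : ℝ) * k ≤ 9 * p := by
    have := (Nat.ceil_lt_add_one (a := 8 * p / k) (by positivity)).le
    calc (v : ℝ) * k ≤ (8 * p / k + 1) * k := by gcongr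
      _ = 8 * p + k := by field_simp
      _ ≤ 9 * p := by linarith
  have hw2 : (w : ℝ) * k ≤ 9 * q := by
    have := (Nat.ceil_lt_add_one (a := 8 * q / k) (by positivity)).le
    calc (w : ℝ) * k ≤ (8 * q / k + 1) * k := by gcongr
      _ = 8 * q + k := by field_simp
      _ ≤ 9 * q := by linarith
  have hblk : ∀ (P : Finset ℝ) (p : ℝ) (v : ℕ), (P.card : ℝ) ≤ p → 0 < v → 8 * p / k ≤ v →
      ∀ x ∈ P, rnk P x / v ≤ ⌊k / 8⌋₊ := by
    intro P p v hP hv0 hv1 x hx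
    apply Nat.le_floor
    refine (Nat.cast_div_le).trans ?_
    have h1 : (rnk P x : ℝ) ≤ p := by
      have : (rnk P x : ℝ) ≤ P.card := by exact_mod_cast (rnk_lt P hx).le
      linarith
    rw [div_le_iff₀ (by exact_mod_cast hv0)]
    rw [div_le_iff₀ hk0] at hv1
    linarith
  set cell : ℝ × ℝ → ℝ → ℕ × ℕ := fun l x => (rnk P x / v, rnk Q (l.1 * x + l.2) / w) with hcell
  set pr : ℝ × ℝ → Finset (ℝ × ℝ) := fun l => ((lpts P Q l) ×ˢ (lpts P Q l)).filter
    (fun z => cell l z.1 = cell l z.2) with hpr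
  set pr' : ℝ × ℝ → Finset (ℝ × ℝ) := fun l => (pr l).filter (fun z => z.1 ≠ z.2) with hpr'
  have hmany : ∀ l ∈ Ls, k ≤ (pr' l).card := by
    intro l hl
    have hc := cells_le P Q l (hs l hl) v w ⌊k / 8⌋₊ ⌊k / 8⌋₊ (hblk P p v hP hv0 hv1) (hblk Q q w hQ hw0 hw1)
    have hcs := cs_pairs (lpts P Q l) (cell l)
    have hcR : (((lpts P Q l).image (cell l)).card : ℝ) ≤ k / 2 := by
      have h1 : (((lpts P Q l).image (cell l)).card : ℝ) ≤ ⌊k / 8⌋₊ + ⌊k / 8⌋₊ + 1 := by exact_mod_cast hc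
      have := Nat.floor_le (a := k / 8) (by positivity)
      linarith
    have hcsR : ((lpts P Q l).card : ℝ) ^ 2 ≤ (((lpts P Q l).image (cell l)).card : ℝ) * (pr l).card := by
      exact_mod_cast hcs
    have hdiag : (pr l).card ≤ (pr' l).card + (lpts P Q l).card := by
      have h1 := Finset.card_filter_add_card_filter_not (s := pr l) (fun z : ℝ × ℝ => z.1 ≠ z.2)
      have h2 : ((pr l).filter (fun z => ¬ z.1 ≠ z.2)).card ≤ (lpts P Q l).card := by
        apply Finset.card_le_card_of_injOn (fun z => z.1)
        · rintro ⟨a, b⟩ hz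
          simp only [hpr, Finset.coe_filter, Finset.mem_filter, Finset.mem_product, Set.mem_ofPred_eq] at hz
          exact hz.1.1.1
        · rintro ⟨a, b⟩ hz ⟨a', b'⟩ hz' h
          simp only [Finset.coe_filter, Set.mem_ofPred_eq, not_not] at hz hz' h
          have h1 := hz.2
          have h2 := hz'.2
          subst h; subst h1; subst h2; rfl
      have h3 : (pr' l).card = ((pr l).filter (fun z => z.1 ≠ z.2)).card := rfl
      omega
    have hdR : ((pr l).card : ℝ) ≤ (pr' l).card + (lpts P Q l).card := by exact_mod_cast hdiag
    have hrl := hrich l hl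
    set X : ℝ := ((lpts P Q l).card : ℝ)
    have h3 : X ^ 2 ≤ k / 2 * (pr l).card :=
      hcsR.trans (mul_le_mul_of_nonneg_right hcR (by positivity))
    have h4 : k * X ≤ X ^ 2 := by nlinarith
    have h5 : X ≤ (pr l).card / 2 := by
      have : k * X ≤ k * ((pr l).card / 2) := by linarith
      exact le_of_mul_le_mul_left this hk0
    linarith
  set BP := (P ×ˢ P).filter (fun z => rnk P z.1 / v = rnk P z.2 / v) with hBP
  set BQ := (Q ×ˢ Q).filter (fun z => rnk Q z.1 / w = rnk Q z.2 / w) with hBQ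
  have hinj : (Ls.sigma pr').card ≤ (BP ×ˢ BQ).card := by
    apply Finset.card_le_card_of_injOn
      (fun z => (z.2, (z.1.1 * z.2.1 + z.1.2, z.1.1 * z.2.2 + z.1.2)))
    · rintro ⟨l, a, b⟩ hz
      simp only [Finset.coe_sigma, Set.mem_sigma_iff, Finset.mem_coe, hpr', hpr, lpts, hcell,
        Finset.mem_filter, Finset.mem_product, Prod.mk.injEq] at hz
      simp only [Finset.mem_coe, Finset.mem_product, hBP, hBQ, Finset.mem_filter]
      obtain ⟨_, ⟨⟨⟨h1, h2⟩, h3, h4⟩, h5, h6⟩, _⟩ := hz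
      exact ⟨⟨⟨h1, h3⟩, h5⟩, ⟨h2, h4⟩, h6⟩
    · rintro ⟨⟨s, t⟩, a, b⟩ hz ⟨⟨s', t'⟩, a', b'⟩ hz' heq
      simp only [Finset.coe_sigma, Set.mem_sigma_iff, Finset.mem_coe, hpr',
        Finset.mem_filter] at hz hz'
      simp only [Prod.mk.injEq] at heq
      obtain ⟨⟨rfl, rfl⟩, h1, h2⟩ := heq
      have hab : a - b ≠ 0 := sub_ne_zero.mpr hz.2.2
      have hss : s = s' := by
        apply mul_right_cancel₀ hab
        linarith
      subst hss
      have : t = t' := by linarith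
      subst this
      rfl
  rw [Finset.card_sigma, Finset.card_product] at hinj
  have h1 : (Ls.card : ℝ) * k ≤ BP.card * BQ.card := by
    have : (∑ l ∈ Ls, ((pr' l).card : ℝ)) ≤ BP.card * BQ.card := by exact_mod_cast hinj
    refine le_trans ?_ this
    rw [← nsmul_eq_mul]
    exact Finset.card_nsmul_le_sum _ _ _ hmany
  have h2 : (BP.card : ℝ) ≤ p * v := by
    have : (BP.card : ℝ) ≤ P.card * v := by exact_mod_cast block_pairs P v hv0
    exact this.trans (mul_le_mul_of_nonneg_right hP (by positivity))
  have h3 : (BQ.card : ℝ) ≤ q * w := by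
    have : (BQ.card : ℝ) ≤ Q.card * w := by exact_mod_cast block_pairs Q w hw0
    exact this.trans (mul_le_mul_of_nonneg_right hQ (by positivity))
  have hp0 : 0 ≤ p := by linarith
  have hq0 : 0 ≤ q := by linarith
  calc (Ls.card : ℝ) * k ^ 3 = (Ls.card * k) * k ^ 2 := by ring
    _ ≤ (BP.card * BQ.card) * k ^ 2 := by gcongr
    _ ≤ ((p * v) * (q * w)) * k ^ 2 := by gcongr
    _ = p * q * (v * k) * (w * k) := by ring
    _ ≤ p * q * (9 * p) * (9 * q) := by gcongr
    _ = 81 * p ^ 2 * q ^ 2 := by ring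

lemma popular {ι : Type*} (I : Finset ι) (f : ι → ℝ) (X Y L : ℝ) (j : ℕ) (hL : 2 ≤ L)
    (hX : (I.card : ℝ) ≤ X) (hY0 : 0 < Y) (hY : ∀ i ∈ I, f i ≤ Y)
    (hsum : X * Y / L ^ j ≤ ∑ i ∈ I, f i) :
    X / L ^ (j + 1) ≤ (I.filter (fun i => Y / L ^ (j + 1) ≤ f i)).card := by
  classical
  have hL0 : 0 < L := by linarith
  have hX0 : 0 ≤ X := le_trans (by positivity) hX
  have h1 := Finset.sum_filter_add_sum_filter_not I (fun i => Y / L ^ (j + 1) ≤ f i) f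
  have h2 : ∑ i ∈ I.filter (fun i => Y / L ^ (j + 1) ≤ f i), f i
      ≤ (I.filter (fun i => Y / L ^ (j + 1) ≤ f i)).card * Y := by
    rw [← nsmul_eq_mul]
    exact Finset.sum_le_card_nsmul _ _ _ (fun i hi => hY i (Finset.mem_filter.mp hi).1)
  have h3 : ∑ i ∈ I.filter (fun i => ¬ Y / L ^ (j + 1) ≤ f i), f i ≤ X * (Y / L ^ (j + 1)) := by
    refine (Finset.sum_le_card_nsmul _ _ (Y / L ^ (j + 1))
      (fun i hi => (not_le.mp (Finset.mem_filter.mp hi).2).le)).trans ?_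
    rw [nsmul_eq_mul]
    refine mul_le_mul_of_nonneg_right ?_ (by positivity)
    refine le_trans ?_ hX
    exact_mod_cast Finset.card_filter_le _ _
  have h4 : 2 * (X * Y / L ^ (j + 1)) ≤ X * Y / L ^ j := by
    rw [pow_succ]
    have : X * Y / L ^ j = L * (X * Y / (L ^ j * L)) := by field_simp
    rw [this]
    exact mul_le_mul_of_nonneg_right hL (by positivity)
  have h5 : X * (Y / L ^ (j + 1)) = X * Y / L ^ (j + 1) := by ring
  have h6 : X / L ^ (j + 1) * Y = X * Y / L ^ (j + 1) := by ring
  apply le_of_mul_le_mul_right _ hY0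
  linarith

lemma dcount {α β : Type*} (I : Finset α) (J : Finset β) (R : α → β → Prop)
    [∀ a b, Decidable (R a b)] :
    ∑ i ∈ I, ((J.filter (fun j => R i j)).card : ℝ) = ∑ j ∈ J, ((I.filter (fun i => R i j)).card : ℝ) := by
  simp only [Finset.card_filter, Nat.cast_sum]
  rw [Finset.sum_comm]

lemma rich_bound (A : Finset ℝ) (N L : ℝ) (j : ℕ) (hL : 9 ≤ L) (hA : (A.card : ℝ) ≤ N ^ 2)
    (hN0 : 0 < N) (hbig : 4 * L ^ j ≤ N ^ 2)
    (Ls : Finset (ℝ × ℝ)) (hs : ∀ l ∈ Ls, l.1 ≠ 0)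
    (hrich : ∀ l ∈ Ls, N ^ 2 / L ^ j ≤ (lpts A A l).card) :
    (Ls.card : ℝ) ≤ N ^ 2 * L ^ (3 * j + 2) := by
  have hL0 : 0 < L := by linarith
  have h := rich_lines A A (N ^ 2) (N ^ 2) (N ^ 2 / L ^ j) hA hA
    (by rw [le_div_iff₀ (by positivity)]; exact hbig) Ls hs hrich
  have h1 : (Ls.card : ℝ) * (N ^ 2 / L ^ j) ^ 3 = Ls.card * (N ^ 6 / L ^ (3 * j)) := by
    rw [div_pow]; congr 2
    · ring
    · rw [← pow_mul, mul_comm]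
  rw [h1] at h
  have h2 : (N ^ 2 * L ^ (3 * j + 2)) * (N ^ 6 / L ^ (3 * j)) = L ^ 2 * (N ^ 2) ^ 2 * (N ^ 2) ^ 2 := by
    rw [pow_add]; field_simp
  have h3 : 81 * (N ^ 2) ^ 2 * (N ^ 2) ^ 2 ≤ L ^ 2 * (N ^ 2) ^ 2 * (N ^ 2) ^ 2 := by
    gcongr; nlinarith
  apply le_of_mul_le_mul_right _ (show 0 < N ^ 6 / L ^ (3 * j) by positivity)
  linarith

lemma core (N L : ℝ) (hL : 9 ≤ L) (A B Λ M : Finset ℝ) (hA : (A.card : ℝ) ≤ N ^ 2) (hBA : B ⊆ A)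
    (hΛ0 : ∀ l ∈ Λ, l ≠ 0) (hΛ : (Λ.card : ℝ) ≤ N)
    (hd : ∀ b ∈ B, N / L ^ 9 ≤ ((Λ.filter (fun l => l * b ∈ A)).card : ℝ))
    (hM0 : ∀ m ∈ M, m ≠ 0) (hMN : (M.card : ℝ) ≤ N) (hMc : N / L ^ 21 ≤ (M.card : ℝ))
    (hr : ∀ m ∈ M, N ^ 2 / L ^ 23 ≤ ((B.filter (fun b => m * (b + 1) - 1 ∈ B)).card : ℝ)) :
    N ≤ L ^ 2000 := by
  classical
  by_contra! hbig
  have hL0 : 0 < L := by linarith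
  have hL1 : 1 ≤ L := by linarith
  have hL2 : 2 ≤ L := by linarith
  have hN0 : 0 < N := lt_trans (by positivity) hbig
  have hNbig : ∀ j : ℕ, j < 2000 → 4 * L ^ j ≤ N := by
    intro j hj
    have h1 : L ^ (j + 1) ≤ L ^ 2000 := pow_le_pow_right₀ hL1 hj
    have h2 : 4 * L ^ j ≤ L ^ (j + 1) := by
      rw [pow_succ, mul_comm]; exact mul_le_mul_of_nonneg_left (by linarith) (by positivity)
    linarith
  have hN1 : 1 ≤ N := by have := hNbig 0 (by norm_num); simp at this; linarith
  have hNbig2 : ∀ j : ℕ, j < 2000 → 4 * L ^ j ≤ N ^ 2 := by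
    intro j hj
    have := hNbig j hj
    nlinarith
  have hBc : (B.card : ℝ) ≤ N ^ 2 := le_trans (by exact_mod_cast Finset.card_le_card hBA) hA
  -- rich maps
  set R : Finset (ℝ × ℝ) := ((Λ ×ˢ (M ×ˢ Λ)).image
    (fun z => (z.2.2 * z.2.1 / z.1, z.2.2 * (z.2.1 - 1)))).filter
      (fun l => N ^ 2 / L ^ 42 ≤ (lpts A A l).card) with hR
  have hRs : ∀ l ∈ R, l.1 ≠ 0 := by
    intro l hl
    simp only [hR, Finset.mem_filter, Finset.mem_image, Finset.mem_product] at hl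
    obtain ⟨⟨⟨a, m, b⟩, ⟨ha, hm, hb⟩, rfl⟩, _⟩ := hl
    exact div_ne_zero (mul_ne_zero (hΛ0 _ hb) (hM0 _ hm)) (hΛ0 _ ha)
  have hRc : (R.card : ℝ) ≤ N ^ 2 * L ^ 128 :=
    rich_bound A N L 42 hL hA hN0 (hNbig2 42 (by norm_num)) R hRs
      (fun l hl => (Finset.mem_filter.mp hl).2)
  set T : Finset ℝ := (R.image Prod.snd).filter
    (fun t => N / L ^ 43 ≤ ((R.filter (fun l => l.2 = t)).card : ℝ)) with hT
  have hTc : (T.card : ℝ) ≤ N * L ^ 171 := by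
    have h1 : ∑ t ∈ T, ((R.filter (fun l => l.2 = t)).card : ℝ) ≤ R.card := by
      have h2 : R.card = ∑ t ∈ R.image Prod.snd, (R.filter (fun l => l.2 = t)).card :=
        Finset.card_eq_sum_card_fiberwise (fun x hx => Finset.mem_image_of_mem _ hx)
      rw [h2, Nat.cast_sum]
      exact Finset.sum_le_sum_of_subset_of_nonneg (Finset.filter_subset _ _)
        (fun _ _ _ => by positivity)
    have h2 : (T.card : ℝ) * (N / L ^ 43) ≤ R.card := by
      refine le_trans ?_ h1
      rw [← nsmul_eq_mul]
      exact Finset.card_nsmul_le_sum _ _ _ (fun t ht => (Finset.mem_filter.mp ht).2)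
    have h3 : (N * L ^ 171) * (N / L ^ 43) = N ^ 2 * L ^ 128 := by field_simp
    apply le_of_mul_le_mul_right _ (show 0 < N / L ^ 43 by positivity)
    linarith
  -- each m has many l with l (m - 1) in T
  have hb2 : ∀ m ∈ M, N / L ^ 43 ≤ ((Λ.filter (fun l => l * (m - 1) ∈ T)).card : ℝ) := by
    intro m hm
    set G := B.filter (fun b => m * (b + 1) - 1 ∈ B) with hG
    have hGr := hr m hm
    set c : ℝ × ℝ → ℝ := fun z =>
      ((G.filter (fun b => z.1 * b ∈ A ∧ z.2 * (m * (b + 1) - 1) ∈ A)).card : ℝ) with hc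
    have hsum : N ^ 2 * N ^ 2 / L ^ 41 ≤ ∑ z ∈ Λ ×ˢ Λ, c z := by
      rw [hc, dcount (Λ ×ˢ Λ) G (fun z b => z.1 * b ∈ A ∧ z.2 * (m * (b + 1) - 1) ∈ A)]
      have h1 : ∀ b ∈ G, N / L ^ 9 * (N / L ^ 9) ≤
          (((Λ ×ˢ Λ).filter (fun z => z.1 * b ∈ A ∧ z.2 * (m * (b + 1) - 1) ∈ A)).card : ℝ) := by
        intro b hb
        rw [hG, Finset.mem_filter] at hb
        rw [Finset.filter_product (fun l => l * b ∈ A) (fun l => l * (m * (b + 1) - 1) ∈ A),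
          Finset.card_product, Nat.cast_mul]
        exact mul_le_mul (hd b hb.1) (hd _ hb.2) (by positivity) (by positivity)
      refine le_trans ?_ (Finset.card_nsmul_le_sum _ _ _ h1)
      rw [nsmul_eq_mul]
      calc N ^ 2 * N ^ 2 / L ^ 41 = N ^ 2 / L ^ 23 * (N / L ^ 9 * (N / L ^ 9)) := by field_simp
        _ ≤ _ := mul_le_mul_of_nonneg_right hGr (by positivity)
    have hGc : (G.card : ℝ) ≤ N ^ 2 :=
      le_trans (by exact_mod_cast Finset.card_filter_le _ _) hBc
    have hpop := popular (Λ ×ˢ Λ) c (N ^ 2) (N ^ 2) L 41 hL2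
      (by rw [Finset.card_product, Nat.cast_mul, sq]
          exact mul_le_mul hΛ hΛ (by positivity) hN0.le)
      (by positivity)
      (fun z _ => le_trans (Nat.cast_le.mpr (Finset.card_filter_le _ _)) hGc) hsum
    set e : ℝ → ℝ := fun l2 => ((Λ.filter (fun l1 => N ^ 2 / L ^ 42 ≤ c (l1, l2))).card : ℝ) with he
    have hsum2 : N * N / L ^ 42 ≤ ∑ l2 ∈ Λ, e l2 := by
      have h1 : (((Λ ×ˢ Λ).filter (fun z => N ^ 2 / L ^ 42 ≤ c z)).card : ℝ) = ∑ l2 ∈ Λ, e l2 := by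
        rw [he]
        simp only [Finset.card_filter, Nat.cast_sum]
        rw [Finset.sum_product_right]
      rw [← h1, ← sq]; exact hpop
    have hpop2 := popular Λ e N N L 42 hL2 hΛ hN0
      (fun l _ => le_trans (Nat.cast_le.mpr (Finset.card_filter_le _ _)) hΛ) hsum2
    refine hpop2.trans ?_
    have hsub : Λ.filter (fun l => N / L ^ (42 + 1) ≤ e l) ⊆ Λ.filter (fun l => l * (m - 1) ∈ T) := by
      intro l2 hl2
      rw [Finset.mem_filter] at hl2 ⊢
      refine ⟨hl2.1, ?_⟩
      have hle : (Λ.filter (fun l1 => N ^ 2 / L ^ 42 ≤ c (l1, l2))).card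
          ≤ (R.filter (fun l => l.2 = l2 * (m - 1))).card := by
        apply Finset.card_le_card_of_injOn (fun l1 => (l2 * m / l1, l2 * (m - 1)))
        · intro l1 hl1
          simp only [Finset.mem_coe, Finset.mem_filter] at hl1
          simp only [Finset.mem_coe, Finset.mem_filter, hR, Finset.mem_image, Finset.mem_product,
            and_true]
          refine ⟨⟨(l1, m, l2), ⟨hl1.1, hm, hl2.1⟩, rfl⟩, hl1.2.trans ?_⟩
          rw [hc, Nat.cast_le]
          have hl10 := hΛ0 l1 hl1.1
          apply Finset.card_le_card_of_injOn (fun b => l1 * b)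
          · intro b hb
            simp only [Finset.mem_coe, Finset.mem_filter] at hb
            simp only [lpts, Finset.mem_coe, Finset.mem_filter]
            refine ⟨hb.2.1, ?_⟩
            have : l2 * m / l1 * (l1 * b) + l2 * (m - 1) = l2 * (m * (b + 1) - 1) := by
              field_simp; ring
            rw [this]; exact hb.2.2
          · exact fun a _ b _ h => mul_left_cancel₀ hl10 h
        · intro a ha b hb h
          simp only [Finset.mem_coe, Finset.mem_filter] at ha hb
          simp only [Prod.mk.injEq, and_true] at h
          have ha0 := hΛ0 a ha.1
          have hb0 := hΛ0 b hb.1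
          have h20 := hΛ0 l2 hl2.1
          have hm0 := hM0 m hm
          rw [div_eq_div_iff ha0 hb0] at h
          exact (mul_left_cancel₀ (mul_ne_zero h20 hm0) h).symm
      have hleR : N / L ^ 43 ≤ ((R.filter (fun l => l.2 = l2 * (m - 1))).card : ℝ) :=
        hl2.2.trans (Nat.cast_le.mpr hle)
      rw [hT, Finset.mem_filter]
      refine ⟨?_, hleR⟩
      have hpos : 0 < (R.filter (fun l => l.2 = l2 * (m - 1))).card := by
        have : (0 : ℝ) < ((R.filter (fun l => l.2 = l2 * (m - 1))).card : ℝ) :=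
          lt_of_lt_of_le (by positivity) hleR
        exact_mod_cast this
      obtain ⟨l, hl⟩ := Finset.card_pos.mp hpos
      rw [Finset.mem_filter] at hl
      exact Finset.mem_image.mpr ⟨l, hl.1, hl.2⟩
    exact_mod_cast Finset.card_le_card hsub
  -- popular ratios
  set rB : ℝ → Finset ℝ := fun q => B.filter (fun b => q * (b + 1) - 1 ∈ B) with hrB
  set Q : Finset ℝ := ((M ×ˢ M).image (fun z => z.1 / z.2)).filter
    (fun q => N ^ 2 / L ^ 89 ≤ ((rB q).card : ℝ)) with hQ
  have hQ0 : ∀ q ∈ Q, q ≠ 0 := by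
    intro q hq
    simp only [hQ, Finset.mem_filter, Finset.mem_image, Finset.mem_product] at hq
    obtain ⟨⟨⟨a, b⟩, ⟨ha, hb⟩, rfl⟩, _⟩ := hq
    exact div_ne_zero (hM0 _ ha) (hM0 _ hb)
  have hpairs : N ^ 2 / L ^ 89 ≤ (((M ×ˢ M).filter (fun z => z.1 / z.2 ∈ Q)).card : ℝ) := by
    set c : ℝ × ℝ → ℝ := fun z =>
      ((B.filter (fun b => z.1 * (b + 1) - 1 ∈ B ∧ z.2 * (b + 1) - 1 ∈ B)).card : ℝ) with hc
    have hsum : N ^ 2 * N ^ 2 / L ^ 88 ≤ ∑ z ∈ M ×ˢ M, c z := by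
      rw [hc, dcount (M ×ˢ M) B (fun z b => z.1 * (b + 1) - 1 ∈ B ∧ z.2 * (b + 1) - 1 ∈ B)]
      set d : ℝ → ℝ := fun b => ((M.filter (fun m => m * (b + 1) - 1 ∈ B)).card : ℝ) with hdd
      have h1 : ∀ b ∈ B, (((M ×ˢ M).filter
          (fun z => z.1 * (b + 1) - 1 ∈ B ∧ z.2 * (b + 1) - 1 ∈ B)).card : ℝ) = d b ^ 2 := by
        intro b hb
        rw [Finset.filter_product (fun m => m * (b + 1) - 1 ∈ B) (fun m => m * (b + 1) - 1 ∈ B),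
          Finset.card_product, Nat.cast_mul, sq]
      rw [Finset.sum_congr rfl h1]
      have h2 : N ^ 3 / L ^ 44 ≤ ∑ b ∈ B, d b := by
        rw [hdd, ← dcount M B (fun m b => m * (b + 1) - 1 ∈ B)]
        refine le_trans ?_ (Finset.card_nsmul_le_sum _ _ _ hr)
        rw [nsmul_eq_mul]
        calc N ^ 3 / L ^ 44 = N / L ^ 21 * (N ^ 2 / L ^ 23) := by field_simp
          _ ≤ _ := mul_le_mul_of_nonneg_right hMc (by positivity)
      have h3 : (∑ b ∈ B, d b) ^ 2 ≤ B.card * ∑ b ∈ B, d b ^ 2 := sq_sum_le_card_mul_sum_sq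
      have h4 : (∑ b ∈ B, d b) ^ 2 ≤ N ^ 2 * ∑ b ∈ B, d b ^ 2 :=
        h3.trans (mul_le_mul_of_nonneg_right hBc (Finset.sum_nonneg (fun _ _ => sq_nonneg _)))
      have h5 : (N ^ 3 / L ^ 44) ^ 2 ≤ (∑ b ∈ B, d b) ^ 2 :=
        pow_le_pow_left₀ (by positivity) h2 2
      have h6 : (N ^ 3 / L ^ 44) ^ 2 = N ^ 2 * (N ^ 2 * N ^ 2 / L ^ 88) := by field_simp
      apply le_of_mul_le_mul_left _ (show 0 < N ^ 2 by positivity)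
      linarith
    have hpop := popular (M ×ˢ M) c (N ^ 2) (N ^ 2) L 88 hL2
      (by rw [Finset.card_product, Nat.cast_mul, sq]
          exact mul_le_mul hMN hMN (by positivity) hN0.le)
      (by positivity)
      (fun z _ => le_trans (Nat.cast_le.mpr (Finset.card_filter_le _ _)) hBc) hsum
    refine hpop.trans ?_
    have hsub : (M ×ˢ M).filter (fun z => N ^ 2 / L ^ (88 + 1) ≤ c z)
        ⊆ (M ×ˢ M).filter (fun z => z.1 / z.2 ∈ Q) := by
      rintro ⟨m, x⟩ hz
      rw [Finset.mem_filter] at hz ⊢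
      refine ⟨hz.1, ?_⟩
      have hmx := Finset.mem_product.mp hz.1
      rw [hQ, Finset.mem_filter]
      refine ⟨Finset.mem_image.mpr ⟨(m, x), hz.1, rfl⟩, hz.2.trans ?_⟩
      rw [hc, Nat.cast_le]
      have hx0 : x ≠ 0 := hM0 x hmx.2
      apply Finset.card_le_card_of_injOn (fun b => x * (b + 1) - 1)
      · intro b hb
        simp only [Finset.mem_coe, Finset.mem_filter] at hb
        simp only [hrB, Finset.mem_coe, Finset.mem_filter]
        refine ⟨hb.2.2, ?_⟩
        have : m / x * (x * (b + 1) - 1 + 1) - 1 = m * (b + 1) - 1 := by field_simp; ring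
        rw [this]; exact hb.2.1
      · intro a _ b _ h
        have : x * a = x * b := by simp only at h; linarith
        exact mul_left_cancel₀ hx0 this
    exact_mod_cast Finset.card_le_card hsub
  have hQc : (Q.card : ℝ) ≤ N * L ^ 398 := by
    set W := (Q ×ˢ Λ).filter
      (fun z => N ^ 2 / L ^ 99 ≤ (lpts A A (z.2 * z.1, z.2 * (z.1 - 1))).card) with hW
    have hWlow : (Q.card : ℝ) * (N / L ^ 99) ≤ W.card := by
      have h1 : (W.card : ℝ) = ∑ q ∈ Q, ((Λ.filter
          (fun l => N ^ 2 / L ^ 99 ≤ (lpts A A (l * q, l * (q - 1))).card)).card : ℝ) := by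
        rw [hW]
        simp only [Finset.card_filter, Nat.cast_sum]
        rw [Finset.sum_product]
      rw [h1, ← nsmul_eq_mul]
      apply Finset.card_nsmul_le_sum
      intro q hq
      have hq2 : N ^ 2 / L ^ 89 ≤ ((rB q).card : ℝ) := (Finset.mem_filter.mp hq).2
      set c : ℝ → ℝ := fun l => (((rB q).filter (fun b => l * (q * (b + 1) - 1) ∈ A)).card : ℝ) with hc
      have hsum : N * N ^ 2 / L ^ 98 ≤ ∑ l ∈ Λ, c l := by
        rw [hc, dcount Λ (rB q) (fun l b => l * (q * (b + 1) - 1) ∈ A)]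
        refine le_trans ?_ (Finset.card_nsmul_le_sum _ _ (N / L ^ 9) ?_)
        · rw [nsmul_eq_mul]
          calc N * N ^ 2 / L ^ 98 = N ^ 2 / L ^ 89 * (N / L ^ 9) := by field_simp
            _ ≤ _ := mul_le_mul_of_nonneg_right hq2 (by positivity)
        · intro b hb
          exact hd _ (Finset.mem_filter.mp hb).2
      have hpop := popular Λ c N (N ^ 2) L 98 hL2 hΛ (by positivity)
        (fun l _ => le_trans (Nat.cast_le.mpr ((Finset.card_filter_le _ _).trans
          (Finset.card_filter_le _ _))) hBc) hsum
      refine hpop.trans ?_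
      rw [Nat.cast_le]
      apply Finset.card_le_card
      intro l hl
      rw [Finset.mem_filter] at hl ⊢
      refine ⟨hl.1, hl.2.trans ?_⟩
      rw [hc, Nat.cast_le]
      apply Finset.card_le_card
      intro b hb
      simp only [hrB, Finset.mem_filter] at hb
      simp only [lpts, Finset.mem_filter]
      refine ⟨hBA hb.1.1, ?_⟩
      have : l * q * b + l * (q - 1) = l * (q * (b + 1) - 1) := by ring
      rw [this]; exact hb.2
    have hinj : Set.InjOn (fun z : ℝ × ℝ => (z.2 * z.1, z.2 * (z.1 - 1))) W := by
      rintro ⟨q, l⟩ hz ⟨q', l'⟩ hz' h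
      simp only [hW, Finset.mem_coe, Finset.mem_filter, Finset.mem_product] at hz hz'
      simp only [Prod.mk.injEq] at h
      have hl : l = l' := by linarith [h.1, h.2]
      subst hl
      rw [mul_left_cancel₀ (hΛ0 l hz.1.2) h.1]
    have hup := rich_bound A N L 99 hL hA hN0 (hNbig2 99 (by norm_num))
      (W.image (fun z => (z.2 * z.1, z.2 * (z.1 - 1))))
      (by
        intro l hl
        rw [Finset.mem_image] at hl
        obtain ⟨⟨q, l⟩, hz, rfl⟩ := hl
        simp only [hW, Finset.mem_filter, Finset.mem_product] at hz
        exact mul_ne_zero (hΛ0 _ hz.1.2) (hQ0 _ hz.1.1))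
      (by
        intro l hl
        rw [Finset.mem_image] at hl
        obtain ⟨⟨q, l⟩, hz, rfl⟩ := hl
        exact (Finset.mem_filter.mp hz).2)
    rw [Finset.card_image_of_injOn hinj] at hup
    have h3 : (N * L ^ 398) * (N / L ^ 99) = N ^ 2 * L ^ (3 * 99 + 2) := by field_simp
    apply le_of_mul_le_mul_right _ (show 0 < N / L ^ 99 by positivity)
    exact (hWlow.trans hup).trans h3.ge
  -- final incidence count
  set c : ℝ × ℝ → ℝ := fun z =>
    ((M.filter (fun m => m / z.1 ∈ Q ∧ z.2 * (m - 1) ∈ T)).card : ℝ) with hc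
  have hsum : N ^ 2 * N / L ^ 132 ≤ ∑ z ∈ M ×ˢ Λ, c z := by
    have h1 : ∑ z ∈ M ×ˢ Λ, c z = ∑ w ∈ (M ×ˢ M).filter (fun w => w.1 / w.2 ∈ Q),
        ((Λ.filter (fun l => l * (w.1 - 1) ∈ T)).card : ℝ) := by
      rw [hc, Finset.sum_filter, Finset.sum_product, Finset.sum_product_right]
      apply Finset.sum_congr rfl
      intro x hx
      rw [dcount Λ M (fun l m => m / x ∈ Q ∧ l * (m - 1) ∈ T)]
      apply Finset.sum_congr rfl
      intro m hm
      by_cases h : m / x ∈ Q <;> simp [h]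
    rw [h1]
    refine le_trans ?_ (Finset.card_nsmul_le_sum _ _ (N / L ^ 43) ?_)
    · rw [nsmul_eq_mul]
      calc N ^ 2 * N / L ^ 132 = N ^ 2 / L ^ 89 * (N / L ^ 43) := by field_simp
        _ ≤ _ := mul_le_mul_of_nonneg_right hpairs (by positivity)
    · intro w hw
      exact hb2 _ (Finset.mem_product.mp (Finset.mem_filter.mp hw).1).1
  have hpop := popular (M ×ˢ Λ) c (N ^ 2) N L 132 hL2
    (by rw [Finset.card_product, Nat.cast_mul, sq]
        exact mul_le_mul hMN hΛ (by positivity) hN0.le)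
    hN0
    (fun z _ => le_trans (Nat.cast_le.mpr (Finset.card_filter_le _ _)) hMN) hsum
  set V := (M ×ˢ Λ).filter (fun z => N / L ^ (132 + 1) ≤ c z) with hV
  have hVm : ∀ z ∈ V, z.1 ≠ 0 ∧ z.2 ≠ 0 ∧ N / L ^ 133 ≤ c z := by
    intro z hz
    rw [hV, Finset.mem_filter, Finset.mem_product] at hz
    exact ⟨hM0 _ hz.1.1, hΛ0 _ hz.1.2, hz.2⟩
  have hinj : Set.InjOn (fun z : ℝ × ℝ => (z.2 * z.1, -z.2)) V := by
    rintro ⟨x, l⟩ hz ⟨x', l'⟩ hz' h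
    simp only [Prod.mk.injEq, neg_inj] at h
    obtain ⟨h1, rfl⟩ := h
    rw [mul_left_cancel₀ (hVm _ hz).2.1 h1]
  have hfin := rich_lines Q T (N * L ^ 398) (N * L ^ 171) (N / L ^ 133) hQc hTc
    (by rw [le_div_iff₀ (by positivity)]; exact hNbig 133 (by norm_num))
    (V.image (fun z => (z.2 * z.1, -z.2)))
    (by
      intro l hl
      rw [Finset.mem_image] at hl
      obtain ⟨z, hz, rfl⟩ := hl
      exact mul_ne_zero (hVm z hz).2.1 (hVm z hz).1)
    (by
      intro l hl
      rw [Finset.mem_image] at hl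
      obtain ⟨⟨x, l⟩, hz, rfl⟩ := hl
      obtain ⟨hx0, hl0, hcz⟩ := hVm _ hz
      refine hcz.trans ?_
      rw [hc, Nat.cast_le]
      apply Finset.card_le_card_of_injOn (fun m => m / x)
      · intro m hm
        simp only [Finset.mem_coe, Finset.mem_filter] at hm
        simp only [lpts, Finset.mem_coe, Finset.mem_filter]
        refine ⟨hm.2.1, ?_⟩
        simp only at hx0
        have : l * x * (m / x) + -l = l * (m - 1) := by field_simp; ring
        rw [this]; exact hm.2.2
      · intro a _ b _ h
        simp only at h hx0
        exact (div_left_inj' hx0).mp h)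
  rw [Finset.card_image_of_injOn hinj] at hfin
  have hlow : N ^ 2 / L ^ 133 * (N / L ^ 133) ^ 3 ≤ 81 * (N * L ^ 398) ^ 2 * (N * L ^ 171) ^ 2 :=
    (mul_le_mul_of_nonneg_right hpop (by positivity)).trans hfin
  have h81 : 81 * (N * L ^ 398) ^ 2 * (N * L ^ 171) ^ 2 ≤ L ^ 2 * (N * L ^ 398) ^ 2 * (N * L ^ 171) ^ 2 := by
    gcongr; nlinarith
  have e1 : N ^ 2 / L ^ 133 * (N / L ^ 133) ^ 3 = N * (N ^ 4 / L ^ 532) := by field_simp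
  have e2 : L ^ 2 * (N * L ^ 398) ^ 2 * (N * L ^ 171) ^ 2 = L ^ 1672 * (N ^ 4 / L ^ 532) := by
    field_simp
  have hN : N ≤ L ^ 1672 := by
    apply le_of_mul_le_mul_right _ (show 0 < N ^ 4 / L ^ 532 by positivity)
    linarith
  have : L ^ 1672 ≤ L ^ 2000 := pow_le_pow_right₀ hL1 (by norm_num)
  linarith

lemma step (N L : ℝ) (j k : ℕ) (B : Finset ℝ) (h0 : (0 : ℝ) ∉ B) (hL : 9 ≤ L)
    (hB : (B.card : ℝ) ≤ N ^ 2) (hB' : N ^ 2 / L ^ j ≤ (B.card : ℝ)) (hN : L ^ (j + 2) ≤ N)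
    (hk : 1 ≤ k) (hNk : N ^ 4 ≤ L ^ k) :
    (∃ S ⊆ B, IsMulSidon (3 * k : ℝ) S ∧ N * L ≤ S.card) ∨
    ∃ Λ : Finset ℝ, (∀ l ∈ Λ, l ≠ 0 ∧ N ^ 2 / L ^ (2 * j + 5) ≤ rep B l) ∧
      N / L ^ (2 * j + 3) ≤ (Λ.card : ℝ) ∧ (Λ.card : ℝ) ≤ N := by
  classical
  have hL0 : 0 < L := by linarith
  have hL1 : 1 ≤ L := by linarith
  have hN9 : 9 ≤ N := by
    have : L ^ 1 ≤ L ^ (j + 2) := pow_le_pow_right₀ hL1 (by omega)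
    rw [pow_one] at this; linarith
  have hN0 : 0 < N := by linarith
  set p := L ^ (j + 2) / N with hp
  set M := N ^ 2 / L ^ (2 * j + 5) with hM
  have hp0 : 0 < p := by positivity
  have hp1 : p ≤ 1 := by rw [hp, div_le_one hN0]; exact hN
  have hM0 : 0 < M := by positivity
  have hpM : p ^ 2 * M = 1 / L := by
    rw [hp, hM, div_pow, ← pow_mul, show 2 * j + 5 = (j + 2) * 2 + 1 by ring, pow_succ L ((j + 2) * 2)]
    field_simp
  have hpB : N * L ^ 2 ≤ p * B.card := by
    calc N * L ^ 2 = p * (N ^ 2 / L ^ j) := by rw [hp, pow_add]; field_simp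
      _ ≤ _ := mul_le_mul_of_nonneg_left hB' hp0.le
  by_cases h1 : p ^ 2 * ∑ l ∈ popSet B M, (rep B l : ℝ) ≤ p * B.card / 4
  · left
    obtain ⟨S, hS, hSid, hSc⟩ := sidon_of_small B h0 p M k hk hp0.le hp1 hM0.le h1 (by
      have e : p ^ (2 * k) * ((B.card : ℝ) ^ 2 * M ^ k) = (B.card : ℝ) ^ 2 * (p ^ 2 * M) ^ k := by
        rw [mul_pow, pow_mul]; ring
      rw [e, hpM, div_pow, one_pow]
      have h2 : (B.card : ℝ) ^ 2 ≤ L ^ k := by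
        calc (B.card : ℝ) ^ 2 ≤ (N ^ 2) ^ 2 := by gcongr
          _ = N ^ 4 := by ring
          _ ≤ _ := hNk
      have h3 : (B.card : ℝ) ^ 2 * (1 / L ^ k) ≤ 1 := by
        rw [mul_one_div, div_le_one (by positivity)]; exact h2
      nlinarith)
    refine ⟨S, hS, hSid, le_trans ?_ hSc⟩
    nlinarith [mul_pos hN0 hL0]
  · right
    push Not at h1
    have hrep : ∀ l, (rep B l : ℝ) ≤ N ^ 2 := fun l =>
      le_trans (Nat.cast_le.mpr (Finset.card_filter_le _ _)) hB
    have hsum : ∑ l ∈ popSet B M, (rep B l : ℝ) ≤ (popSet B M).card * N ^ 2 := by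
      rw [← nsmul_eq_mul]; exact Finset.sum_le_card_nsmul _ _ _ (fun l _ => hrep l)
    have hlow : N / L ^ (2 * j + 3) ≤ ((popSet B M).card : ℝ) := by
      have h2 : N * L ^ 2 / 4 ≤ p ^ 2 * ((popSet B M).card * N ^ 2) := by
        have := mul_le_mul_of_nonneg_left hsum (sq_nonneg p)
        linarith
      have h3 : p ^ 2 * ((popSet B M).card * N ^ 2) = L ^ (2 * j + 4) * (popSet B M).card := by
        rw [hp, div_pow, ← pow_mul, show (j + 2) * 2 = 2 * j + 4 by ring]; field_simp
      rw [h3] at h2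
      have h4 : L ^ (2 * j + 4) * (N / L ^ (2 * j + 3)) = N * L := by
        rw [show 2 * j + 4 = (2 * j + 3) + 1 by ring, pow_succ]; field_simp
      apply le_of_mul_le_mul_left _ (show 0 < L ^ (2 * j + 4) by positivity)
      rw [h4]
      nlinarith [mul_pos hN0 hL0]
    obtain ⟨Λ, hΛ, hΛc⟩ := Finset.exists_subset_card_eq (s := popSet B M)
      (n := ⌈N / L ^ (2 * j + 3)⌉₊) (Nat.ceil_le.mpr hlow)
    refine ⟨Λ, ?_, ?_, ?_⟩
    · intro l hl
      have h2 : M ≤ rep B l := by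
        have := hΛ hl
        simp only [popSet, Finset.mem_filter] at this
        exact this.2.2
      refine ⟨?_, h2⟩
      rintro rfl
      have h3 : rep B 0 = 0 := by simp [rep, h0]
      rw [h3, Nat.cast_zero] at h2
      linarith
    · rw [hΛc]; exact Nat.le_ceil _
    · rw [hΛc]
      have h2 := (Nat.ceil_lt_add_one (a := N / L ^ (2 * j + 3)) (by positivity)).le
      have h3 : N / L ^ (2 * j + 3) ≤ N / 2 := by
        apply div_le_div_of_nonneg_left hN0.le (by norm_num)
        have : L ^ 1 ≤ L ^ (2 * j + 3) := pow_le_pow_right₀ hL1 (by omega)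
        rw [pow_one] at this; linarith
      linarith

lemma main_large (N L : ℝ) (k : ℕ) (A : Finset ℝ) (h0 : (0 : ℝ) ∉ A) (h1 : (-1 : ℝ) ∉ A) (hL : 9 ≤ L)
    (hA : (A.card : ℝ) = N ^ 2) (hN : L ^ 2000 < N) (hk : 1 ≤ k) (hNk : N ^ 4 ≤ L ^ k) :
    ∃ S : Finset ℝ, (S ⊆ A ∨ S ⊆ A.image (· + 1)) ∧ IsMulSidon (3 * k : ℝ) S ∧ N * L ≤ S.card := by
  classical
  have hL0 : 0 < L := by linarith
  have hL1 : 1 ≤ L := by linarith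
  have hN0 : 0 < N := lt_trans (by positivity) hN
  rcases step N L 0 k A h0 hL hA.le (by simp [hA])
    ((pow_le_pow_right₀ hL1 (by norm_num)).trans hN.le) hk hNk with ⟨S, hS, h2, h3⟩ | ⟨Λ, hΛ, hΛ1, hΛ2⟩
  · exact ⟨S, Or.inl hS, h2, h3⟩
  simp only [mul_zero, zero_add] at hΛ hΛ1
  set B := A.filter (fun b => N / L ^ 9 ≤ ((Λ.filter (fun l => l * b ∈ A)).card : ℝ)) with hB
  have hBA : B ⊆ A := Finset.filter_subset _ _
  have hBc : N ^ 2 / L ^ 9 ≤ (B.card : ℝ) := by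
    have hsum : N ^ 2 * N / L ^ 8 ≤ ∑ b ∈ A, ((Λ.filter (fun l => l * b ∈ A)).card : ℝ) := by
      rw [← dcount Λ A (fun l b => l * b ∈ A)]
      refine le_trans ?_ (Finset.card_nsmul_le_sum _ _ (N ^ 2 / L ^ 5) (fun l hl => (hΛ l hl).2))
      rw [nsmul_eq_mul]
      calc N ^ 2 * N / L ^ 8 = N / L ^ 3 * (N ^ 2 / L ^ 5) := by field_simp
        _ ≤ _ := mul_le_mul_of_nonneg_right hΛ1 (by positivity)
    exact popular A _ (N ^ 2) N L 8 (by linarith) hA.le hN0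
      (fun b _ => le_trans (Nat.cast_le.mpr (Finset.card_filter_le _ _)) hΛ2) hsum
  have hinj : Function.Injective (fun x : ℝ => x + 1) := add_left_injective 1
  have hcard : (B.image (· + 1)).card = B.card := Finset.card_image_of_injective _ hinj
  have h01 : (0 : ℝ) ∉ B.image (· + 1) := by
    intro h
    rw [Finset.mem_image] at h
    obtain ⟨b, hb, hb1⟩ := h
    apply h1
    have : b = -1 := by linarith
    exact this ▸ hBA hb
  rcases step N L 9 k (B.image (· + 1)) h01 hL
    (by rw [hcard, ← hA]; exact_mod_cast Finset.card_le_card hBA) (by rw [hcard]; exact hBc)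
    ((pow_le_pow_right₀ hL1 (by norm_num)).trans hN.le) hk hNk with ⟨S, hS, h2, h3⟩ | ⟨M, hM, hM1, hM2⟩
  · exact ⟨S, Or.inr (hS.trans (Finset.image_subset_image hBA)), h2, h3⟩
  exfalso
  have := core N L hL A B Λ M hA.le hBA (fun l hl => (hΛ l hl).1) hΛ2
    (fun b hb => (Finset.mem_filter.mp hb).2) (fun m hm => (hM m hm).1) hM2 hM1 (by
      intro m hm
      refine (hM m hm).2.trans ?_
      rw [rep, Nat.cast_le]
      apply Finset.card_le_card_of_injOn (fun x => x - 1)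
      · intro x hx
        simp only [Finset.mem_coe, Finset.mem_filter, Finset.mem_image] at hx ⊢
        obtain ⟨⟨b, hb, rfl⟩, c, hc, hcm⟩ := hx
        have e1 : b + 1 - 1 = b := by ring
        have e2 : m * (b + 1) - 1 = c := by linarith
        rw [e1, e2]
        exact ⟨hb, hc⟩
      · exact fun a _ b _ h => sub_left_injective h)
  linarith

theorem stmt8 :
    ∃ c K c0 : ℝ, 0 < c ∧ 1 ≤ K ∧ 0 < c0 ∧
      ∀ A : Finset ℝ,
        ∃ S : Finset ℝ,
          (S ⊆ A ∨ S ⊆ A.image (· + 1)) ∧ IsMulSidon K S ∧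
          c0 * (A.card : ℝ) ^ ((1 : ℝ) / 2 + c) ≤ S.card := by
  classical
  obtain ⟨E, h9, hE⟩ : ∃ E : ℝ, 0 < E ∧ 9 = E ^ ((1 : ℝ) / 6000) :=
    ⟨(9 : ℝ) ^ (6000 : ℝ), Real.rpow_pos_of_pos (by norm_num) _, by
      rw [← Real.rpow_mul (by norm_num), mul_one_div_cancel (by norm_num), Real.rpow_one]⟩
  obtain ⟨n0, hn0⟩ : ∃ n0 : ℝ, n0 = 4 + 2 * E := ⟨_, rfl⟩
  refine ⟨1 / 6000, 3 * (12000 : ℕ), 1 / n0, by norm_num, by norm_num, by rw [hn0]; positivity, ?_⟩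
  intro A
  have hn04 : 4 < n0 := by linarith
  have hn00 : 0 < n0 := by linarith
  rcases A.eq_empty_or_nonempty with rfl | ⟨a, ha⟩
  · refine ⟨∅, Or.inl (by simp), ?_, ?_⟩
    · intro l _
      have := mulPairCount_le ∅ l
      have h2 : rep ∅ l = 0 := by simp [rep]
      have h3 : mulPairCount l (∅ : Finset ℝ) = 0 := by omega
      rw [h3]; norm_num
    · simp only [Finset.card_empty, Nat.cast_zero]
      rw [Real.zero_rpow (by norm_num)]; simp
  have hA1 : (1 : ℝ) ≤ A.card := by exact_mod_cast Finset.card_pos.mpr ⟨a, ha⟩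
  by_cases hsmall : (A.card : ℝ) ≤ n0
  · refine ⟨{a}, Or.inl (by simpa using ha), ?_, ?_⟩
    · intro l _
      have h1 := mulPairCount_le {a} l
      have h2 : rep {a} l ≤ 1 := (Finset.card_filter_le _ _).trans (by simp)
      have h3 : (mulPairCount l ({a} : Finset ℝ) : ℝ) ≤ 1 := by exact_mod_cast h1.trans h2
      refine h3.trans (by norm_num)
    · rw [Finset.card_singleton, Nat.cast_one, one_div, inv_mul_le_iff₀ hn00, mul_one]
      refine le_trans ?_ hsmall
      calc (A.card : ℝ) ^ ((1 : ℝ) / 2 + 1 / 6000) ≤ (A.card : ℝ) ^ (1 : ℝ) :=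
            Real.rpow_le_rpow_of_exponent_le hA1 (by norm_num)
        _ = _ := Real.rpow_one _
  push Not at hsmall
  set A0 := A \ {0, -1} with hA0
  have hA0A : A0 ⊆ A := Finset.sdiff_subset
  have hcA0 : (A.card : ℝ) ≤ A0.card + 2 := by
    have h1 := Finset.le_card_sdiff ({0, -1} : Finset ℝ) A
    have h2 : ({0, -1} : Finset ℝ).card ≤ 2 := Finset.card_le_two
    have h3 : A.card ≤ A0.card + 2 := by rw [hA0]; omega
    exact_mod_cast h3
  set n : ℝ := (A0.card : ℝ) with hn
  have hnA : (A.card : ℝ) / 2 ≤ n := by linarith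
  have hnbig : E ≤ n := by linarith
  have hnpos : 0 < n := by linarith
  have hn1 : 1 < n := by linarith
  set N := n ^ ((1 : ℝ) / 2) with hN
  set L := n ^ ((1 : ℝ) / 6000) with hL
  have hN2 : N ^ 2 = n := by
    rw [hN, ← Real.rpow_natCast, ← Real.rpow_mul hnpos.le]; norm_num
  have hL9 : 9 ≤ L := by
    calc (9 : ℝ) = E ^ ((1 : ℝ) / 6000) := hE
      _ ≤ _ := Real.rpow_le_rpow h9.le hnbig (by norm_num)
  have hLN : L ^ 2000 < N := by
    rw [hL, hN, ← Real.rpow_natCast, ← Real.rpow_mul hnpos.le]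
    exact Real.rpow_lt_rpow_of_exponent_lt hn1 (by norm_num)
  have hNk : N ^ 4 ≤ L ^ 12000 := by
    rw [hL, hN, ← Real.rpow_natCast, ← Real.rpow_natCast, ← Real.rpow_mul hnpos.le,
      ← Real.rpow_mul hnpos.le]
    exact Real.rpow_le_rpow_of_exponent_le hn1.le (by norm_num)
  obtain ⟨S, hS, hSid, hSc⟩ := main_large N L 12000 A0 (by simp [hA0]) (by simp [hA0]) hL9
    hN2.symm hLN (by norm_num) hNk
  refine ⟨S, ?_, hSid, le_trans ?_ hSc⟩
  · rcases hS with h | h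
    · exact Or.inl (h.trans hA0A)
    · exact Or.inr (h.trans (Finset.image_subset_image hA0A))
  · have hNL : N * L = n ^ ((1 : ℝ) / 2 + 1 / 6000) := by
      rw [hN, hL, ← Real.rpow_add hnpos]
    rw [hNL, one_div, inv_mul_le_iff₀ hn00]
    have h2n : (A.card : ℝ) ≤ 2 * n := by linarith
    calc (A.card : ℝ) ^ ((1 : ℝ) / 2 + 1 / 6000) ≤ (2 * n) ^ ((1 : ℝ) / 2 + 1 / 6000) :=
          Real.rpow_le_rpow (by positivity) h2n (by norm_num)
      _ = 2 ^ ((1 : ℝ) / 2 + 1 / 6000) * n ^ ((1 : ℝ) / 2 + 1 / 6000) :=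
          Real.mul_rpow (by norm_num) hnpos.le
      _ ≤ n0 * n ^ ((1 : ℝ) / 2 + 1 / 6000) := by
          apply mul_le_mul_of_nonneg_right _ (by positivity)
          calc (2 : ℝ) ^ ((1 : ℝ) / 2 + 1 / 6000) ≤ 2 ^ (1 : ℝ) :=
                Real.rpow_le_rpow_of_exponent_le (by norm_num) (by norm_num)
            _ = 2 := Real.rpow_one _
            _ ≤ n0 := by linarith
end

section
/- There exist absolute constants c > 0, K ≥ 1 and c0 > 0 such that for every finite set A ⊆ ℝ, one has max{ Sid^+_K(A), Sid^+_K(exp(A)) } ≥ c0·|A|^{1/2 + c}, where exp(A) = {e^a : a ∈ A}. -/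
open scoped BigOperators

/-- The number of pairs `(x, y) ∈ S × S` with `x - y = mu`. -/
noncomputable def subPairCount {F : Type*} [Sub F] (mu : F) (S : Finset F) : ℕ :=
  Set.ncard {q : F × F | q.1 ∈ S ∧ q.2 ∈ S ∧ q.1 - q.2 = mu}

/-- `S` is additively `K`-Sidon: for every `mu ≠ 0` the number of pairs
`(x, y) ∈ S × S` with `x - y = mu` is at most `K`. -/
def IsAddSidon {F : Type*} [SubtractionMonoid F] (K : ℝ) (S : Finset F) : Prop :=
  ∀ mu : F, mu ≠ 0 → (subPairCount mu S : ℝ) ≤ K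

/-- Index of a real in a finite set. -/
noncomputable def idx (X : Finset ℝ) (x : ℝ) : ℕ := (X.filter (fun y => y < x)).card

lemma idx_lt {X : Finset ℝ} {x : ℝ} (hx : x ∈ X) : idx X x < X.card := by
  apply Finset.card_lt_card
  rw [Finset.filter_ssubset]
  exact ⟨x, hx, lt_irrefl x⟩

lemma idx_mono {X : Finset ℝ} {x y : ℝ} (h : x ≤ y) : idx X x ≤ idx X y := by
  apply Finset.card_le_card
  intro z hz
  simp only [Finset.mem_filter] at hz ⊢
  exact ⟨hz.1, hz.2.trans_le h⟩

lemma idx_strict {X : Finset ℝ} {x y : ℝ} (hx : x ∈ X) (h : x < y) : idx X x < idx X y := by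
  apply Finset.card_lt_card
  refine ⟨?_, ?_⟩
  · intro z hz
    simp only [Finset.mem_filter] at hz ⊢
    exact ⟨hz.1, hz.2.trans h⟩
  · intro hc
    have := hc (Finset.mem_filter.2 ⟨hx, h⟩)
    simp at this

lemma idx_inj {X : Finset ℝ} {x y : ℝ} (hx : x ∈ X) (hy : y ∈ X) (h : idx X x = idx X y) :
    x = y := by
  rcases lt_trichotomy x y with h1 | h1 | h1
  · have := idx_strict hx h1; omega
  · exact h1
  · have := idx_strict hy h1; omega

lemma block_card (X : Finset ℝ) (h : ℕ) (hh : 0 < h) (β : ℕ) :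
    (X.filter (fun x => idx X x / h = β)).card ≤ h := by
  have : (X.filter (fun x => idx X x / h = β)).card ≤ (Finset.Ico (β * h) (β * h + h)).card := by
    apply Finset.card_le_card_of_injOn (idx X)
    · intro x hx
      simp only [Finset.coe_filter, Set.mem_ofPred_eq] at hx
      have h1 := Nat.div_add_mod (idx X x) h
      have h2 := Nat.mod_lt (idx X x) hh
      rw [hx.2] at h1
      simp only [Finset.coe_Ico, Set.mem_Ico]
      rw [mul_comm] at h1
      omega
    · intro x hx y hy hxy
      simp only [Finset.coe_filter, Set.mem_ofPred_eq] at hx hy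
      exact idx_inj hx.1 hy.1 hxy
  simpa using this

lemma pairs_card (X : Finset ℝ) (h : ℕ) (hh : 0 < h) :
    ((X ×ˢ X).filter (fun p => idx X p.1 / h = idx X p.2 / h)).card ≤ X.card * h := by
  have : ((X ×ˢ X).filter (fun p => idx X p.1 / h = idx X p.2 / h)).card
      = ∑ x ∈ X, (X.filter (fun y => idx X y / h = idx X x / h)).card := by
    rw [Finset.card_filter, Finset.sum_product]
    apply Finset.sum_congr rfl
    intro x _
    rw [Finset.card_filter]
    apply Finset.sum_congr rfl
    intro y _
    simp only [eq_comm]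
  rw [this]
  calc _ ≤ ∑ x ∈ X, h := Finset.sum_le_sum (fun x _ => block_card X h hh _)
    _ = _ := by simp

lemma fibre_pairs (S : Finset ℝ) (σ : ℝ → ℕ) (m : ℕ) (hσ : ∀ x ∈ S, σ x < m) :
    S.card ≤ m + ((S ×ˢ S).filter (fun p => p.1 < p.2 ∧ σ p.1 = σ p.2)).card := by
  classical
  set P := (S ×ˢ S).filter (fun p => p.1 < p.2 ∧ σ p.1 = σ p.2) with hP
  have h1 : (P.image Prod.snd).card ≤ P.card := Finset.card_image_le
  have h2 : (S \ P.image Prod.snd).card ≤ (Finset.range m).card := by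
    apply Finset.card_le_card_of_injOn σ
    · intro x hx
      simp only [Finset.coe_range, Set.mem_Iio]
      exact hσ x (Finset.mem_sdiff.1 (Finset.mem_coe.1 hx)).1
    · intro x hx y hy hxy
      have hx' := Finset.mem_sdiff.1 (Finset.mem_coe.1 hx)
      have hy' := Finset.mem_sdiff.1 (Finset.mem_coe.1 hy)
      rcases lt_trichotomy x y with h | h | h
      · exfalso
        apply hy'.2
        exact Finset.mem_image.2 ⟨(x, y), by simp [hP, hx'.1, hy'.1, h, hxy], rfl⟩
      · exact h
      · exfalso
        apply hx'.2
        exact Finset.mem_image.2 ⟨(y, x), by simp [hP, hx'.1, hy'.1, h, hxy], rfl⟩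
  have h3 := Finset.card_le_card_sdiff_add_card (s := S) (t := P.image Prod.snd)
  simp only [Finset.card_range] at h2
  omega

lemma rich_aux (X : Finset ℝ) (L : Finset (ℝ × ℝ)) (h : ℕ) (hh : 0 < h)
    (hpos : ∀ l ∈ L, 0 < l.1) :
    ∑ l ∈ L, (X.filter (fun x => l.1 * x + l.2 ∈ X)).card
      ≤ L.card * (2 * (X.card / h) + 1) + (X.card * h) ^ 2 := by
  classical
  set σ : ℝ × ℝ → ℝ → ℕ := fun l x => idx X x / h + idx X (l.1 * x + l.2) / h with hσ
  set Xl : ℝ × ℝ → Finset ℝ := fun l => X.filter (fun x => l.1 * x + l.2 ∈ X) with hXl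
  set P : ℝ × ℝ → Finset (ℝ × ℝ) := fun l =>
    ((Xl l ×ˢ Xl l).filter (fun p => p.1 < p.2 ∧ σ l p.1 = σ l p.2)) with hP
  have h1 : ∀ l ∈ L, (Xl l).card ≤ (2 * (X.card / h) + 1) + (P l).card := by
    intro l hl
    apply fibre_pairs
    intro x hx
    simp only [hXl, Finset.mem_filter] at hx
    have a1 := Nat.div_le_div_right (c := h) (idx_lt hx.1).le
    have a2 := Nat.div_le_div_right (c := h) (idx_lt hx.2).le
    simp only [hσ]
    omega
  have h2 : ∑ l ∈ L, (P l).card ≤ (X.card * h) ^ 2 := by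
    rw [← Finset.card_sigma]
    set Q := ((X ×ˢ X).filter (fun p => idx X p.1 / h = idx X p.2 / h)) with hQ
    have : (L.sigma P).card ≤ (Q ×ˢ Q).card := by
      apply Finset.card_le_card_of_injOn
        (fun z => ((z.2.1, z.2.2), (z.1.1 * z.2.1 + z.1.2, z.1.1 * z.2.2 + z.1.2)))
      · rintro ⟨⟨r, s⟩, ⟨x, y⟩⟩ hz
        simp only [Finset.mem_coe, Finset.mem_sigma, hP, hXl, Finset.mem_filter,
          Finset.mem_product] at hz
        obtain ⟨hl, ⟨⟨hx, hx'⟩, ⟨hy, hy'⟩⟩, hxy, hs⟩ := hz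
        have hr := hpos _ hl
        simp only at hr hx hx' hy hy' hxy hs
        have b1 : idx X x / h ≤ idx X y / h := Nat.div_le_div_right (idx_mono hxy.le)
        have b2 : idx X (r * x + s) / h ≤ idx X (r * y + s) / h := by
          apply Nat.div_le_div_right
          apply idx_mono
          have := mul_le_mul_of_nonneg_left hxy.le hr.le
          linarith
        simp only [hσ] at hs
        simp only [Finset.mem_coe, Finset.mem_product, hQ, Finset.mem_filter]
        refine ⟨⟨⟨hx, hy⟩, ?_⟩, ⟨⟨hx', hy'⟩, ?_⟩⟩ <;> omega
      · rintro ⟨⟨r, s⟩, ⟨x, y⟩⟩ hz ⟨⟨r', s'⟩, ⟨x', y'⟩⟩ hz' heq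
        simp only [Finset.mem_coe, Finset.mem_sigma, hP, hXl, Finset.mem_filter,
          Finset.mem_product] at hz
        obtain ⟨hl, ⟨⟨hx, hx'⟩, ⟨hy, hy'⟩⟩, hxy, hs⟩ := hz
        simp only [Prod.mk.injEq] at heq hxy
        obtain ⟨⟨rfl, rfl⟩, e1, e2⟩ := heq
        have e3 : (r - r') * (x - y) = 0 := by linear_combination e1 - e2
        have e4 : r = r' := by
          rcases mul_eq_zero.1 e3 with e | e <;> linarith
        subst e4
        have e5 : s = s' := by linarith
        subst e5
        rfl
    refine this.trans ?_
    rw [Finset.card_product, sq]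
    exact Nat.mul_le_mul (pairs_card X h hh) (pairs_card X h hh)
  calc _ ≤ ∑ l ∈ L, ((2 * (X.card / h) + 1) + (P l).card) := Finset.sum_le_sum h1
    _ = L.card * (2 * (X.card / h) + 1) + ∑ l ∈ L, (P l).card := by
      rw [Finset.sum_add_distrib]; simp
    _ ≤ _ := by omega

/-- Szemeredi-Trotter type bound for rich increasing lines in a grid. -/
lemma rich_lines_s9 (X : Finset ℝ) (L : Finset (ℝ × ℝ)) (k : ℝ) (hk : 8 ≤ k)
    (hpos : ∀ l ∈ L, 0 < l.1)
    (hL : ∀ l ∈ L, k ≤ ((X.filter (fun x => l.1 * x + l.2 ∈ X)).card : ℝ)) :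
    (L.card : ℝ) * k ^ 3 ≤ 162 * (X.card : ℝ) ^ 4 := by
  rcases L.eq_empty_or_nonempty with rfl | ⟨l0, hl0⟩
  · simp
  have hkN : k ≤ X.card := (hL l0 hl0).trans (by exact_mod_cast Finset.card_filter_le _ _)
  set N : ℝ := (X.card : ℝ) with hN
  have hk0 : 0 < k := by linarith
  set h : ℕ := ⌈8 * N / k⌉₊ with hh
  have hpos8 : 0 < 8 * N / k := by apply div_pos <;> linarith
  have hh0 : 0 < h := Nat.ceil_pos.2 hpos8
  have hlow : 8 * N / k ≤ h := Nat.le_ceil _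
  have hup : (h : ℝ) ≤ 9 * N / k := by
    have := (Nat.ceil_lt_add_one hpos8.le).le
    have h1 : 1 ≤ N / k := by rw [le_div_iff₀ hk0]; linarith
    calc (h : ℝ) ≤ 8 * N / k + 1 := this
      _ ≤ 8 * N / k + N / k := by linarith
      _ = _ := by ring
  have haux := rich_aux X L h hh0 hpos
  have haux' : (∑ l ∈ L, ((X.filter (fun x => l.1 * x + l.2 ∈ X)).card : ℝ))
      ≤ L.card * (2 * ((X.card / h : ℕ) : ℝ) + 1) + (N * h) ^ 2 := by
    rw [hN]; exact_mod_cast haux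
  have h1 : (L.card : ℝ) * k ≤ ∑ l ∈ L, ((X.filter (fun x => l.1 * x + l.2 ∈ X)).card : ℝ) := by
    rw [← nsmul_eq_mul]; exact Finset.card_nsmul_le_sum _ _ _ hL
  have h2 : ((X.card / h : ℕ) : ℝ) ≤ k / 8 := by
    have a : ((X.card / h : ℕ) : ℝ) ≤ N / h := Nat.cast_div_le
    refine a.trans ?_
    have hh0' : (0 : ℝ) < h := by exact_mod_cast hh0
    rw [div_le_iff₀ hh0']
    rw [div_le_iff₀ hk0] at hlow
    linarith
  have h3 : (L.card : ℝ) * (2 * ((X.card / h : ℕ) : ℝ) + 1) ≤ L.card * (k / 2) := by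
    apply mul_le_mul_of_nonneg_left _ (Nat.cast_nonneg _)
    linarith
  have h4 : (L.card : ℝ) * k ≤ 2 * (N * h) ^ 2 := by linarith
  have h5 : h * k ≤ 9 * N := by rwa [le_div_iff₀ hk0] at hup
  have h6 : (h * k) ^ 2 ≤ (9 * N) ^ 2 := by
    apply pow_le_pow_left₀ _ h5
    positivity
  calc (L.card : ℝ) * k ^ 3 = (L.card * k) * k ^ 2 := by ring
    _ ≤ (2 * (N * h) ^ 2) * k ^ 2 := by gcongr
    _ = 2 * N ^ 2 * (h * k) ^ 2 := by ring
    _ ≤ 2 * N ^ 2 * (9 * N) ^ 2 := by gcongr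
    _ = _ := by ring

lemma mono_count {V : Type*} [Fintype V] [DecidableEq V] (q : ℕ) (W : Finset V) (hW : W.Nonempty) :
    (Finset.univ.filter (fun f : V → Fin q => ∃ c, ∀ w ∈ W, f w = c)).card * q ^ (W.card - 1)
      ≤ q ^ (Fintype.card V) := by
  classical
  obtain ⟨w0, hw0⟩ := hW
  have h1 : (Finset.univ.filter (fun f : V → Fin q => ∃ c, ∀ w ∈ W, f w = c)).card
      ≤ (Finset.univ : Finset (Fin q × ({v // v ∉ W} → Fin q))).card := by
    apply Finset.card_le_card_of_injOn (fun f => (f w0, fun v => f v.1))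
    · intro f _; simp
    · intro f hf g hg hfg
      simp only [Finset.coe_filter, Finset.mem_univ, true_and, Set.mem_ofPred_eq] at hf hg
      obtain ⟨c, hc⟩ := hf
      obtain ⟨d, hd⟩ := hg
      simp only [Prod.mk.injEq] at hfg
      funext v
      by_cases hv : v ∈ W
      · rw [hc v hv, hd v hv, ← hc w0 hw0, ← hd w0 hw0]; exact hfg.1
      · exact congrFun hfg.2 ⟨v, hv⟩
  have hcard : Fintype.card {v // v ∉ W} = Fintype.card V - W.card := by
    rw [Fintype.card_subtype_compl]; simp
  simp only [Finset.card_univ, Fintype.card_prod, Fintype.card_fin, Fintype.card_fun, hcard] at h1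
  have hle : W.card ≤ Fintype.card V := Finset.card_le_univ W
  have hp : 0 < W.card := Finset.card_pos.2 ⟨w0, hw0⟩
  calc _ ≤ (q * q ^ (Fintype.card V - W.card)) * q ^ (W.card - 1) := Nat.mul_le_mul_right _ h1
    _ = q ^ (1 + (Fintype.card V - W.card) + (W.card - 1)) := by ring
    _ = _ := by congr 1; omega

/-- Independent sets in hypergraphs by a random colouring and deletion. -/
lemma hyper {V : Type*} [Fintype V] [DecidableEq V] (q j : ℕ) (hq : 0 < q) (hj : 0 < j)
    (H : Finset (Finset V)) (hH : ∀ W ∈ H, W.card = j)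
    (hT : 2 * H.card ≤ q ^ (j - 1) * Fintype.card V) :
    ∃ S : Finset V, (∀ W ∈ H, ¬ W ⊆ S) ∧ Fintype.card V ≤ 2 * q * S.card := by
  classical
  rcases isEmpty_or_nonempty V with hV | hV
  · refine ⟨∅, ?_, by simp⟩
    intro W hW hs
    have h1 := hH W hW
    rw [Finset.subset_empty.1 hs] at h1
    simp at h1
    omega
  have : Nonempty (Fin q) := ⟨⟨0, hq⟩⟩
  set M : (V → Fin q) → Finset (Finset V) := fun f => H.filter (fun W => ∃ c, ∀ w ∈ W, f w = c)
    with hM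
  -- double count
  have hsum : (∑ f : V → Fin q, (M f).card) * q ^ (j - 1) ≤ H.card * q ^ (Fintype.card V) := by
    have : ∑ f : V → Fin q, (M f).card
        = ∑ W ∈ H, (Finset.univ.filter (fun f : V → Fin q => ∃ c, ∀ w ∈ W, f w = c)).card := by
      simp only [hM, Finset.card_filter]
      rw [Finset.sum_comm]
    rw [this, Finset.sum_mul]
    calc _ ≤ ∑ W ∈ H, q ^ (Fintype.card V) := by
          apply Finset.sum_le_sum
          intro W hW
          have := mono_count q W (Finset.card_pos.1 (by rw [hH W hW]; exact hj))
          rwa [hH W hW] at this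
      _ = _ := by simp
  obtain ⟨f, hf⟩ : ∃ f : V → Fin q, 2 * (M f).card ≤ Fintype.card V := by
    by_contra hcon
    push Not at hcon
    have h1 : ∑ f : V → Fin q, Fintype.card V < ∑ f : V → Fin q, 2 * (M f).card :=
      Finset.sum_lt_sum_of_nonempty Finset.univ_nonempty (fun f _ => hcon f)
    rw [← Finset.mul_sum] at h1
    simp only [Finset.sum_const, Finset.card_univ, Fintype.card_fun, Fintype.card_fin,
      smul_eq_mul] at h1
    have hqp : 0 < q ^ (j - 1) := by positivity
    have h2 := Nat.mul_lt_mul_of_pos_right h1 hqp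
    have h3 : (2 * ∑ f : V → Fin q, (M f).card) * q ^ (j - 1)
        ≤ q ^ (j - 1) * Fintype.card V * q ^ (Fintype.card V) := by
      calc _ = 2 * ((∑ f : V → Fin q, (M f).card) * q ^ (j - 1)) := by ring
        _ ≤ 2 * (H.card * q ^ (Fintype.card V)) := Nat.mul_le_mul_left _ hsum
        _ = (2 * H.card) * q ^ (Fintype.card V) := by ring
        _ ≤ _ := Nat.mul_le_mul_right _ hT
    have h4 : q ^ (j - 1) * Fintype.card V * q ^ (Fintype.card V)
      = q ^ Fintype.card V * Fintype.card V * q ^ (j - 1) := by ring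
    omega
  -- colour classes
  set C : Fin q → Finset V := fun c => Finset.univ.filter (fun v => f v = c) with hC
  set B : Fin q → Finset (Finset V) := fun c => H.filter (fun W => W ⊆ C c) with hB
  have hCs : ∑ c, (C c).card = Fintype.card V := by
    rw [← Finset.card_univ]
    exact (Finset.card_eq_sum_card_fiberwise (fun _ _ => by simp)).symm
  have hBs : ∑ c, (B c).card ≤ (M f).card := by
    rw [← Finset.card_biUnion]
    · apply Finset.card_le_card
      intro W hW
      simp only [Finset.mem_biUnion, hB, Finset.mem_filter, Finset.mem_univ, true_and] at hW
      obtain ⟨c, h1, h2⟩ := hW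
      simp only [hM, Finset.mem_filter]
      refine ⟨h1, c, fun w hw => ?_⟩
      have := h2 hw
      simpa [hC] using this
    · intro c _ d _ hcd
      rw [Function.onFun, Finset.disjoint_left]
      intro W hW hW'
      simp only [hB, Finset.mem_filter] at hW hW'
      obtain ⟨w, hw⟩ := Finset.card_pos.1 (by rw [hH W hW.1]; exact hj)
      have h1 := hW.2 hw
      have h2 := hW'.2 hw
      simp only [hC, Finset.mem_filter, Finset.mem_univ, true_and] at h1 h2
      exact hcd (h1.symm.trans h2)
  obtain ⟨c, hc⟩ : ∃ c, Fintype.card V + 2 * q * (B c).card ≤ 2 * q * (C c).card := by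
    by_contra hcon
    push Not at hcon
    have h1 := Finset.sum_lt_sum_of_nonempty (s := (Finset.univ : Finset (Fin q)))
      Finset.univ_nonempty (fun c _ => hcon c)
    rw [Finset.sum_add_distrib, ← Finset.mul_sum, ← Finset.mul_sum, hCs] at h1
    simp only [Finset.sum_const, Finset.card_univ, Fintype.card_fin, smul_eq_mul] at h1
    have h2 : 2 * q * ∑ c, (B c).card ≤ q * Fintype.card V := by
      calc _ ≤ 2 * q * (M f).card := Nat.mul_le_mul_left _ hBs
        _ = q * (2 * (M f).card) := by ring
        _ ≤ _ := Nat.mul_le_mul_left _ hf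
    have h3 : 2 * q * Fintype.card V = q * Fintype.card V + q * Fintype.card V := by ring
    omega
  have hne : ∀ W ∈ H, W.Nonempty := fun W hW =>
    Finset.card_pos.1 (by rw [hH W hW]; exact hj)
  choose! g hg using hne
  refine ⟨C c \ (B c).image g, ?_, ?_⟩
  · intro W hW hsub
    have h1 : W ∈ B c := by
      simp only [hB, Finset.mem_filter]
      exact ⟨hW, hsub.trans Finset.sdiff_subset⟩
    have h2 := hsub (hg W hW)
    exact (Finset.mem_sdiff.1 h2).2 (Finset.mem_image_of_mem g h1)
  · have h1 := Finset.card_le_card_sdiff_add_card (s := C c) (t := (B c).image g)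
    have h2 : ((B c).image g).card ≤ (B c).card := Finset.card_image_le
    have h3 : (C c).card ≤ (C c \ (B c).image g).card + (B c).card := by omega
    have h4 := Nat.mul_le_mul_left (2 * q) h3
    rw [mul_add] at h4
    omega

/-- Number of representations of a difference. -/
noncomputable def rr (B : Finset ℝ) (μ : ℝ) : ℕ := (B.filter (fun y => y + μ ∈ B)).card

/-- Nonzero differences. -/
noncomputable def dl (B : Finset ℝ) : Finset ℝ :=
  ((B ×ˢ B).image (fun p => p.1 - p.2)).erase 0

lemma subPair_eq (S : Finset ℝ) (μ : ℝ) : subPairCount μ S = rr S μ := by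
  classical
  have : {q : ℝ × ℝ | q.1 ∈ S ∧ q.2 ∈ S ∧ q.1 - q.2 = μ}
      = (((S.filter (fun y => y + μ ∈ S)).image (fun y => (y + μ, y)) : Finset (ℝ × ℝ)) :
        Set (ℝ × ℝ)) := by
    ext ⟨x, y⟩
    simp only [Set.mem_ofPred_eq, Finset.coe_image, Finset.coe_filter, Set.mem_image,
      Prod.mk.injEq]
    constructor
    · rintro ⟨h1, h2, h3⟩
      exact ⟨y, ⟨h2, by rw [← h3]; simpa using h1⟩, by linarith, rfl⟩
    · rintro ⟨z, ⟨h1, h2⟩, h3, h4⟩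
      subst h4
      subst h3
      exact ⟨h2, h1, by ring⟩
  unfold subPairCount rr
  rw [this, Set.ncard_coe_finset, Finset.card_image_of_injective]
  intro a b hab
  simpa using hab

lemma half_disjoint (Y : Finset ℝ) (μ : ℝ) (hμ : μ ≠ 0) (j : ℕ) (hY : 2 * j ≤ Y.card) :
    ∃ Z ⊆ Y, Z.card = j ∧ Disjoint Z (Z.image (fun y => y + μ)) := by
  classical
  have key : ∀ Z ⊆ Y, j ≤ Z.card → (∀ y ∈ Z, y + μ ∉ Z) →
      ∃ Z ⊆ Y, Z.card = j ∧ Disjoint Z (Z.image (fun y => y + μ)) := by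
    intro Z hZ hj h
    obtain ⟨Z', hZ', hc⟩ := Finset.exists_subset_card_eq hj
    refine ⟨Z', hZ'.trans hZ, hc, ?_⟩
    rw [Finset.disjoint_right]
    intro a ha ha'
    obtain ⟨y, hy, rfl⟩ := Finset.mem_image.1 ha
    exact h y (hZ' hy) (hZ' ha')
  have hfl : ∀ y : ℝ, ⌊(y + μ) / μ⌋ = ⌊y / μ⌋ + 1 := by
    intro y
    rw [add_div, div_self hμ, Int.floor_add_one]
  have hs := Finset.card_filter_add_card_filter_not (s := Y) (fun y => Even ⌊y / μ⌋)
  by_cases hc : j ≤ (Y.filter (fun y => Even ⌊y / μ⌋)).card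
  · apply key _ (Finset.filter_subset _ _) hc
    intro y hy hy'
    simp only [Finset.mem_filter, hfl] at hy hy'
    exact (Int.even_add_one.1 hy'.2) hy.2
  · apply key _ (Finset.filter_subset _ _) (show j ≤ (Y.filter (fun y => ¬ Even ⌊y / μ⌋)).card by omega)
    intro y hy hy'
    simp only [Finset.mem_filter, hfl] at hy hy'
    exact hy'.2 (Int.even_add_one.2 hy.2)

lemma sidon_of_T (B : Finset ℝ) (j q : ℕ) (hj : 0 < j) (hq : 0 < q)
    (hT : 2 * ∑ μ ∈ dl B, rr B μ ^ j ≤ q ^ (2 * j - 1) * B.card) :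
    ∃ S ⊆ B, IsAddSidon (2 * j : ℝ) S ∧ B.card ≤ 2 * q * S.card := by
  classical
  set E : Finset {x // x ∈ B} → Finset ℝ := fun W => W.map (Function.Embedding.subtype _) with hE
  set H : Finset (Finset {x // x ∈ B}) := Finset.univ.filter (fun W => W.card = 2 * j ∧
    ∃ μ : ℝ, μ ≠ 0 ∧ ∃ Y : Finset ℝ, Y.card = j ∧ E W = Y ∪ Y.image (fun y => y + μ)) with hH
  have hHc : H.card ≤ ∑ μ ∈ dl B, rr B μ ^ j := by
    have h1 : (H.image E).card = H.card := by
      apply Finset.card_image_of_injective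
      exact Finset.map_injective _
    rw [← h1]
    have h2 : H.image E ⊆ ((dl B).sigma
        (fun μ => (B.filter (fun y => y + μ ∈ B)).powersetCard j)).image
        (fun z => z.2 ∪ z.2.image (fun y => y + z.1)) := by
      intro U hU
      obtain ⟨W, hW, rfl⟩ := Finset.mem_image.1 hU
      simp only [hH, Finset.mem_filter, Finset.mem_univ, true_and] at hW
      obtain ⟨_, μ, hμ, Y, hY, hEW⟩ := hW
      have hsub : ∀ x ∈ E W, x ∈ B := by
        intro x hx
        simp only [hE, Finset.mem_map, Function.Embedding.subtype_apply] at hx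
        obtain ⟨a, _, rfl⟩ := hx
        exact a.2
      have hY1 : ∀ y ∈ Y, y ∈ B ∧ y + μ ∈ B := by
        intro y hy
        refine ⟨hsub y ?_, hsub (y + μ) ?_⟩
        · rw [hEW]; exact Finset.mem_union_left _ hy
        · rw [hEW]; exact Finset.mem_union_right _ (Finset.mem_image_of_mem _ hy)
      refine Finset.mem_image.2 ⟨⟨μ, Y⟩, ?_, hEW.symm⟩
      simp only [Finset.mem_sigma, Finset.mem_powersetCard]
      refine ⟨?_, ?_, hY⟩
      · obtain ⟨y, hy⟩ := Finset.card_pos.1 (by rw [hY]; exact hj)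
        obtain ⟨a, b⟩ := hY1 y hy
        simp only [dl, Finset.mem_erase, Finset.mem_image, Finset.mem_product]
        exact ⟨hμ, (y + μ, y), ⟨b, a⟩, by simp⟩
      · intro y hy
        exact Finset.mem_filter.2 (hY1 y hy)
    refine (Finset.card_le_card h2).trans (Finset.card_image_le.trans ?_)
    rw [Finset.card_sigma]
    apply Finset.sum_le_sum
    intro μ _
    rw [Finset.card_powersetCard]
    exact Nat.choose_le_pow _ _
  obtain ⟨S, hS, hc⟩ := hyper q (2 * j) hq (by omega) H
    (fun W hW => (Finset.mem_filter.1 hW).2.1)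
    (by rw [Fintype.card_coe]; omega)
  rw [Fintype.card_coe] at hc
  refine ⟨E S, ?_, ?_, ?_⟩
  · intro x hx
    simp only [hE, Finset.mem_map, Function.Embedding.subtype_apply] at hx
    obtain ⟨a, _, rfl⟩ := hx
    exact a.2
  · intro μ hμ
    rw [subPair_eq]
    by_contra hcon
    push Not at hcon
    have h1 : 2 * j < rr (E S) μ := by exact_mod_cast hcon
    obtain ⟨Z, hZ, hZc, hZd⟩ := half_disjoint ((E S).filter (fun y => y + μ ∈ E S)) μ hμ j h1.le
    have hZS : Z ∪ Z.image (fun y => y + μ) ⊆ E S := by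
      apply Finset.union_subset
      · exact hZ.trans (Finset.filter_subset _ _)
      · intro x hx
        obtain ⟨y, hy, rfl⟩ := Finset.mem_image.1 hx
        exact (Finset.mem_filter.1 (hZ hy)).2
    obtain ⟨W, hW, hWe⟩ := Finset.subset_map_iff.1 hZS
    apply hS W _ hW
    simp only [hH, Finset.mem_filter, Finset.mem_univ, true_and]
    refine ⟨?_, μ, hμ, Z, hZc, hWe.symm⟩
    have h2 : (E W).card = W.card := Finset.card_map _
    rw [← h2]
    change (Finset.map _ W).card = _
    rw [← hWe, Finset.card_union_of_disjoint hZd, Finset.card_image_of_injective _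
      (add_left_injective μ), hZc]
    ring
  · have : (E S).card = S.card := Finset.card_map _
    rw [this]; exact hc

lemma sum_rr_le (B Δ : Finset ℝ) : ∑ μ ∈ Δ, rr B μ ≤ B.card ^ 2 := by
  classical
  unfold rr
  rw [← Finset.card_sigma, sq, ← Finset.card_product]
  apply Finset.card_le_card_of_injOn (fun z => (z.2, z.2 + z.1))
  · rintro ⟨μ, y⟩ h
    simp only [Finset.mem_coe, Finset.mem_sigma, Finset.mem_filter] at h
    simp only [Finset.mem_coe, Finset.mem_product]
    exact h.2
  · rintro ⟨μ, y⟩ _ ⟨μ', y'⟩ _ h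
    simp only [Prod.mk.injEq] at h
    obtain ⟨rfl, h⟩ := h
    have : μ = μ' := by linarith
    subst this
    rfl

lemma sidon_popular (B : Finset ℝ) (j q : ℕ) (hj : 0 < j) (hq : 0 < q) (t p N : ℝ)
    (ht : 0 ≤ t) (hN : (B.card : ℝ) ≤ N)
    (hp : (((dl B).filter (fun μ => t ≤ (rr B μ : ℝ))).card : ℝ) ≤ p)
    (hT : 2 * (p * N ^ j + N ^ 2 * t ^ (j - 1)) ≤ (q : ℝ) ^ (2 * j - 1) * B.card) :
    ∃ S ⊆ B, IsAddSidon (2 * j : ℝ) S ∧ (B.card : ℝ) ≤ 2 * q * S.card := by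
  classical
  have hN0 : 0 ≤ N := (Nat.cast_nonneg _).trans hN
  have hrN : ∀ μ, (rr B μ : ℝ) ≤ N := fun μ =>
    le_trans (by exact_mod_cast Finset.card_filter_le _ _) hN
  have key : (∑ μ ∈ dl B, (rr B μ : ℝ) ^ j) ≤ p * N ^ j + N ^ 2 * t ^ (j - 1) := by
    rw [← Finset.sum_filter_add_sum_filter_not (dl B) (fun μ => t ≤ (rr B μ : ℝ))]
    apply add_le_add
    · calc _ ≤ ∑ μ ∈ (dl B).filter (fun μ => t ≤ (rr B μ : ℝ)), N ^ j := by
            apply Finset.sum_le_sum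
            intro μ _
            exact pow_le_pow_left₀ (Nat.cast_nonneg _) (hrN μ) j
        _ = _ * N ^ j := by rw [Finset.sum_const, nsmul_eq_mul]
        _ ≤ _ := by gcongr
    · calc _ ≤ ∑ μ ∈ (dl B).filter (fun μ => ¬ t ≤ (rr B μ : ℝ)), (rr B μ : ℝ) * t ^ (j - 1) := by
            apply Finset.sum_le_sum
            intro μ hμ
            have h1 := (Finset.mem_filter.1 hμ).2
            obtain ⟨i, rfl⟩ : ∃ i, j = i + 1 := ⟨j - 1, by omega⟩
            rw [pow_succ', Nat.add_sub_cancel]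
            gcongr
            linarith
        _ = (∑ μ ∈ (dl B).filter (fun μ => ¬ t ≤ (rr B μ : ℝ)), (rr B μ : ℝ)) * t ^ (j - 1) := by
            rw [Finset.sum_mul]
        _ ≤ _ := by
            gcongr
            have h2 : (∑ μ ∈ (dl B).filter (fun μ => ¬ t ≤ (rr B μ : ℝ)), (rr B μ : ℝ))
              ≤ (B.card : ℝ) ^ 2 := by exact_mod_cast sum_rr_le B _
            exact h2.trans (pow_le_pow_left₀ (Nat.cast_nonneg _) hN 2)
  obtain ⟨S, h1, h2, h3⟩ := sidon_of_T B j q hj hq (by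
    have : (2 : ℝ) * (∑ μ ∈ dl B, (rr B μ : ℝ) ^ j) ≤ (q : ℝ) ^ (2 * j - 1) * B.card := by linarith
    exact_mod_cast this)
  exact ⟨S, h1, h2, by exact_mod_cast h3⟩

/-- Main counting inequality. -/
lemma core_s9 (X D R B : Finset ℝ) (hR : ∀ r ∈ R, 0 < r) (F G k m0 : ℝ) (hF : 0 ≤ F)
    (hk : 8 ≤ k) (hm : 8 ≤ m0)
    (hf : ∀ b ∈ B, F ≤ ((D.filter (fun d => b + d ∈ X)).card : ℝ))
    (hG : ∀ r ∈ R, G ≤ ((B.filter (fun b => r * b ∈ B)).card : ℝ)) :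
    (R.card : ℝ) * G * F ^ 2 ≤ R.card * D.card ^ 2 * k + 162 * D.card ^ 4 / m0 ^ 3 * D.card * X.card
      + 162 * X.card ^ 4 / k ^ 3 * m0 * X.card := by
  classical
  set Ln : Finset (ℝ × ℝ) := (R ×ˢ (D ×ˢ D)).image (fun z => (z.1, z.2.2 - z.1 * z.2.1)) with hLn
  set m : ℝ × ℝ → Finset ℝ := fun l => D.filter (fun d => l.1 * d + l.2 ∈ D) with hmdef
  set w : ℝ × ℝ → Finset ℝ := fun l => X.filter (fun x => l.1 * x + l.2 ∈ X) with hw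
  have hLpos : ∀ l ∈ Ln, 0 < l.1 := by
    intro l hl
    obtain ⟨z, hz, rfl⟩ := Finset.mem_image.1 hl
    exact hR _ (Finset.mem_product.1 hz).1
  -- lower bound
  set f : ℝ → Finset ℝ := fun b => D.filter (fun d => b + d ∈ X) with hfdef
  set Q := R.sigma (fun r => (B.filter (fun b => r * b ∈ B)).sigma
    (fun b => f b ×ˢ f (r * b))) with hQ
  have hlow : (R.card : ℝ) * G * F ^ 2 ≤ (Q.card : ℝ) := by
    rw [hQ, Finset.card_sigma]
    push_cast
    rw [mul_assoc, ← nsmul_eq_mul]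
    apply Finset.card_nsmul_le_sum
    intro r hr
    rw [Finset.card_sigma]
    push_cast
    calc G * F ^ 2 ≤ ((B.filter (fun b => r * b ∈ B)).card : ℝ) * F ^ 2 := by
          have := hG r hr
          gcongr
      _ ≤ _ := by
          rw [← nsmul_eq_mul]
          apply Finset.card_nsmul_le_sum
          intro b hb
          obtain ⟨h1, h2⟩ := Finset.mem_filter.1 hb
          rw [Finset.card_product, sq]
          push_cast
          exact mul_le_mul (hf b h1) (hf _ h2) hF (Nat.cast_nonneg _)
  have hup : Q.card ≤ ∑ l ∈ Ln, (m l).card * (w l).card := by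
    have e : ∑ l ∈ Ln, (m l).card * (w l).card = (Ln.sigma (fun l => m l ×ˢ w l)).card := by
      rw [Finset.card_sigma]
      simp only [Finset.card_product]
    rw [e]
    apply Finset.card_le_card_of_injOn
      (fun z => ⟨(z.1, z.2.2.2 - z.1 * z.2.2.1), (z.2.2.1, z.2.1 + z.2.2.1)⟩)
    · rintro ⟨r, b, d, d'⟩ hz
      simp only [hQ, Finset.mem_coe, Finset.mem_sigma, Finset.mem_filter, Finset.mem_product,
        hfdef] at hz
      obtain ⟨hr, ⟨hb, hb'⟩, ⟨hd, hbd⟩, ⟨hd', hbd'⟩⟩ := hz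
      simp only [Finset.mem_coe, Finset.mem_sigma, Finset.mem_product, hmdef, hw,
        Finset.mem_filter]
      refine ⟨Finset.mem_image.2 ⟨(r, d, d'), by simp [hr, hd, hd'], rfl⟩, ⟨hd, ?_⟩, hbd, ?_⟩
      · convert hd' using 1; ring
      · convert hbd' using 1; ring
    · rintro ⟨r, b, d, d'⟩ _ ⟨r1, b1, d1, d1'⟩ _ h
      simp only [Sigma.mk.injEq, Prod.mk.injEq, heq_eq_eq] at h
      obtain ⟨⟨rfl, h1⟩, rfl, h2⟩ := h
      have e1 : d' = d1' := by linarith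
      have e2 : b = b1 := by linarith
      subst e1
      subst e2
      rfl
  have hmsum : ∑ l ∈ Ln, (m l).card ≤ R.card * D.card ^ 2 := by
    rw [← Finset.card_sigma]
    have : R.card * D.card ^ 2 = (R ×ˢ (D ×ˢ D)).card := by
      simp only [Finset.card_product]; ring
    rw [this]
    apply Finset.card_le_card_of_injOn (fun z => (z.1.1, z.2, z.1.1 * z.2 + z.1.2))
    · rintro ⟨⟨r, s⟩, d⟩ hz
      simp only [Finset.mem_coe, Finset.mem_sigma, hmdef, Finset.mem_filter] at hz
      obtain ⟨hl, hd, hd'⟩ := hz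
      simp only [Finset.mem_coe, Finset.mem_product]
      refine ⟨?_, hd, hd'⟩
      obtain ⟨z, hz, he⟩ := Finset.mem_image.1 hl
      have h1 := (Finset.mem_product.1 hz).1
      simp only [Prod.mk.injEq] at he
      rw [← he.1]; exact h1
    · rintro ⟨⟨r, s⟩, d⟩ _ ⟨⟨r', s'⟩, d'⟩ _ h
      simp only [Prod.mk.injEq] at h
      obtain ⟨rfl, rfl, h⟩ := h
      have : s = s' := by linarith
      subst this
      rfl
  have hheavy := rich_lines_s9 D (Ln.filter (fun l => m0 ≤ ((m l).card : ℝ))) m0 hm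
    (fun l hl => hLpos l (Finset.mem_filter.1 hl).1) (fun l hl => (Finset.mem_filter.1 hl).2)
  have hrich := rich_lines_s9 X (Ln.filter (fun l => k ≤ ((w l).card : ℝ))) k hk
    (fun l hl => hLpos l (Finset.mem_filter.1 hl).1) (fun l hl => (Finset.mem_filter.1 hl).2)
  have hm3 : 0 < m0 ^ 3 := by positivity
  have hk3 : 0 < k ^ 3 := by positivity
  rw [← le_div_iff₀ hm3] at hheavy
  rw [← le_div_iff₀ hk3] at hrich
  have hmD : ∀ l, ((m l).card : ℝ) ≤ D.card := fun l => by
    exact_mod_cast Finset.card_filter_le _ _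
  have hwX : ∀ l, ((w l).card : ℝ) ≤ X.card := fun l => by
    exact_mod_cast Finset.card_filter_le _ _
  have hpt : ∀ l ∈ Ln, ((m l).card : ℝ) * (w l).card ≤ (m l).card * k
      + (if m0 ≤ ((m l).card : ℝ) then (D.card * X.card : ℝ) else 0)
      + (if k ≤ ((w l).card : ℝ) then (m0 * X.card : ℝ) else 0) := by
    intro l _
    have h0 : (0 : ℝ) ≤ (m l).card := Nat.cast_nonneg _
    have h0' : (0 : ℝ) ≤ (w l).card := Nat.cast_nonneg _
    have hDX : (0 : ℝ) ≤ D.card * X.card := by positivity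
    have hmX : (0 : ℝ) ≤ m0 * X.card := by positivity
    have hmk : (0 : ℝ) ≤ (m l).card * k := by positivity
    have i2 : (0 : ℝ) ≤ (if k ≤ ((w l).card : ℝ) then (m0 * X.card : ℝ) else 0) := by
      split_ifs <;> first | exact hmX | exact le_rfl
    by_cases c1 : m0 ≤ ((m l).card : ℝ)
    · rw [if_pos c1]
      have := mul_le_mul (hmD l) (hwX l) h0' (Nat.cast_nonneg _)
      linarith
    · rw [if_neg c1]
      by_cases c2 : k ≤ ((w l).card : ℝ)
      · rw [if_pos c2]
        push Not at c1
        have := mul_le_mul c1.le (hwX l) h0' (by linarith)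
        linarith
      · rw [if_neg c2]
        push Not at c2
        have := mul_le_mul_of_nonneg_left c2.le h0
        linarith
  calc (R.card : ℝ) * G * F ^ 2 ≤ (Q.card : ℝ) := hlow
    _ ≤ ∑ l ∈ Ln, ((m l).card : ℝ) * (w l).card := by exact_mod_cast hup
    _ ≤ _ := Finset.sum_le_sum hpt
    _ = (∑ l ∈ Ln, ((m l).card : ℝ)) * k
        + ((Ln.filter (fun l => m0 ≤ ((m l).card : ℝ))).card : ℝ) * (D.card * X.card)
        + ((Ln.filter (fun l => k ≤ ((w l).card : ℝ))).card : ℝ) * (m0 * X.card) := by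
      rw [Finset.sum_add_distrib, Finset.sum_add_distrib, Finset.sum_mul,
        ← Finset.sum_filter, ← Finset.sum_filter]
      simp only [Finset.sum_const, nsmul_eq_mul]
    _ ≤ (R.card * D.card ^ 2 : ℝ) * k + (162 * D.card ^ 4 / m0 ^ 3) * (D.card * X.card)
        + (162 * X.card ^ 4 / k ^ 3) * (m0 * X.card) := by
      have : (∑ l ∈ Ln, ((m l).card : ℝ)) ≤ (R.card * D.card ^ 2 : ℝ) := by exact_mod_cast hmsum
      gcongr
    _ = _ := by ring

lemma sidon_real (B : Finset ℝ) (i : ℕ) (N ε ε' c c2 γ : ℝ) (hN1 : 1 ≤ N)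
    (hBN : (B.card : ℝ) ≤ N) (hBl : N ^ (1 - ε') / 2 ≤ (B.card : ℝ))
    (hp : (((dl B).filter (fun μ => N ^ (1 - ε) ≤ (rr B μ : ℝ))).card : ℝ) ≤ N ^ (1 / 2 - c))
    (hε : 1 / 2 + c ≤ ε * i) (hc : (2 * i + 1) * c2 + ε' + γ ≤ c) (hc2 : c2 ≤ 1 / 2)
    (hγ : 8 ≤ N ^ γ) :
    ∃ S ⊆ B, IsAddSidon (2 * (i + 1 : ℕ) : ℝ) S ∧ N ^ (1 / 2 + c2 - ε') / 8 ≤ (S.card : ℝ) := by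
  have hN0 : 0 < N := by linarith
  set u : ℝ := N ^ (1 / 2 - c2) with hu
  have hu1 : 1 ≤ u := Real.one_le_rpow hN1 (by linarith)
  set q : ℕ := ⌈u⌉₊ with hq
  have hqu : u ≤ q := Nat.le_ceil _
  have hq2 : (q : ℝ) ≤ 2 * u := by
    have := (Nat.ceil_lt_add_one (by linarith : 0 ≤ u)).le
    change (q : ℝ) ≤ u + 1 at this
    linarith
  have hq0 : 0 < q := Nat.ceil_pos.2 (by linarith)
  obtain ⟨S, h1, h2, h3⟩ := sidon_popular B (i + 1) q (by omega) hq0 (N ^ (1 - ε)) _ N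
    (by positivity) hBN hp (by
      have e1 : N ^ (1 / 2 - c) * N ^ (i + 1) = N ^ ((i : ℝ) + 3 / 2 - c) := by
        rw [← Real.rpow_natCast, ← Real.rpow_add hN0]
        congr 1; push_cast; ring
      have e2 : N ^ 2 * (N ^ (1 - ε)) ^ (i + 1 - 1) ≤ N ^ ((i : ℝ) + 3 / 2 - c) := by
        rw [Nat.add_sub_cancel, ← Real.rpow_natCast, ← Real.rpow_natCast, ← Real.rpow_mul hN0.le,
          ← Real.rpow_add hN0]
        apply Real.rpow_le_rpow_of_exponent_le hN1
        push_cast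
        linarith
      have e3 : N ^ ((1 / 2 - c2) * (2 * i + 1)) ≤ (q : ℝ) ^ (2 * (i + 1) - 1) := by
        have : 2 * (i + 1) - 1 = 2 * i + 1 := by omega
        rw [this]
        calc _ = u ^ (2 * i + 1) := by
              rw [hu, ← Real.rpow_natCast, ← Real.rpow_mul hN0.le]
              push_cast; rfl
          _ ≤ _ := pow_le_pow_left₀ (by linarith) hqu _
      have e4 : N ^ γ * N ^ ((i : ℝ) + 3 / 2 - c)
          ≤ N ^ ((1 / 2 - c2) * (2 * i + 1)) * N ^ (1 - ε') := by
        rw [← Real.rpow_add hN0, ← Real.rpow_add hN0]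
        apply Real.rpow_le_rpow_of_exponent_le hN1
        linarith
      have e5 : 8 * N ^ ((i : ℝ) + 3 / 2 - c) ≤ N ^ γ * N ^ ((i : ℝ) + 3 / 2 - c) := by
        gcongr
      have e6 : N ^ ((1 / 2 - c2) * (2 * i + 1)) * (N ^ (1 - ε') / 2)
          ≤ (q : ℝ) ^ (2 * (i + 1) - 1) * B.card := by
        gcongr
      rw [e1]
      linarith)
  refine ⟨S, h1, h2, ?_⟩
  have hS0 : (0 : ℝ) ≤ S.card := Nat.cast_nonneg _
  have f1 : 2 * (q : ℝ) * S.card ≤ 2 * (2 * u) * S.card := by gcongr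
  have f2 : N ^ (1 / 2 + c2 - ε') * u = N ^ (1 - ε') := by
    rw [hu, ← Real.rpow_add hN0]; congr 1; ring
  have f3 : N ^ (1 / 2 + c2 - ε') * u ≤ (8 * S.card) * u := by
    rw [f2]; linarith
  have := le_of_mul_le_mul_right f3 (by linarith)
  linarith

lemma no_struct (X D R B : Finset ℝ) (hR : ∀ r ∈ R, 0 < r) (N : ℝ) (hXN : (X.card : ℝ) = N)
    (hN1 : 1 ≤ N) (hN : 8 ≤ N ^ (1 / 1000 : ℝ))
    (hDc : N ^ (1 / 2 - 1 / 50 : ℝ) ≤ (D.card : ℝ)) (hRc : N ^ (1 / 2 - 1 / 50 : ℝ) ≤ (R.card : ℝ))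
    (hf : ∀ b ∈ B, N ^ (-(1 / 20000) : ℝ) * D.card / 2
      ≤ ((D.filter (fun d => b + d ∈ X)).card : ℝ))
    (hG : ∀ r ∈ R, N ^ (1 - 1 / 100 : ℝ) ≤ ((B.filter (fun b => r * b ∈ B)).card : ℝ)) :
    False := by
  have hN0 : 0 < N := by linarith
  set d : ℝ := (D.card : ℝ) with hd
  set ρ : ℝ := (R.card : ℝ) with hρ
  set v : ℝ := N ^ (1 / 1000 : ℝ) with hv
  have hvp : ∀ n : ℕ, v ^ n = N ^ ((n : ℝ) / 1000) := by
    intro n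
    rw [hv, ← Real.rpow_natCast, ← Real.rpow_mul hN0.le]; congr 1; ring
  have hv8 : ∀ n : ℕ, (8 : ℝ) ^ n ≤ v ^ n := fun n => pow_le_pow_left₀ (by norm_num) hN n
  have hd0 : 0 < d := lt_of_lt_of_le (by positivity) hDc
  have hρ0 : 0 < ρ := lt_of_lt_of_le (by positivity) hRc
  set a : ℝ := N ^ (1 - 101 / 10000 : ℝ) with ha
  have ha0 : 0 < a := by positivity
  set m0 : ℝ := d * N ^ (-(1 / 8) : ℝ) with hm0
  have hk : 8 ≤ a / 12 := by
    have h1 : v ^ 3 ≤ a := by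
      rw [hvp]; apply Real.rpow_le_rpow_of_exponent_le hN1; norm_num
    have := hv8 3
    norm_num at this
    linarith
  have hm : 8 ≤ m0 := by
    have h1 : v ≤ N ^ (1 / 2 - 1 / 50 : ℝ) * N ^ (-(1 / 8) : ℝ) := by
      rw [← Real.rpow_add hN0]; apply Real.rpow_le_rpow_of_exponent_le hN1; norm_num
    have h2 : N ^ (1 / 2 - 1 / 50 : ℝ) * N ^ (-(1 / 8) : ℝ) ≤ m0 := by
      rw [hm0]; gcongr
    linarith
  have hc := core_s9 X D R B hR (N ^ (-(1 / 20000) : ℝ) * d / 2) (N ^ (1 - 1 / 100 : ℝ)) (a / 12) m0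
    (by positivity) hk hm hf hG
  rw [hXN] at hc
  have hm00 : 0 < m0 := by linarith
  -- rewrite the three terms
  have t0 : ρ * N ^ (1 - 1 / 100 : ℝ) * (N ^ (-(1 / 20000) : ℝ) * d / 2) ^ 2
      = ρ * d ^ 2 * a / 4 := by
    have : a = N ^ (1 - 1 / 100 : ℝ) * (N ^ (-(1 / 20000) : ℝ)) ^ 2 := by
      rw [← Real.rpow_natCast, ← Real.rpow_mul hN0.le, ← Real.rpow_add hN0, ha]
      congr 1; norm_num
    rw [this]; ring
  have t2 : 162 * d ^ 4 / m0 ^ 3 * d * N < ρ * d ^ 2 * a / 12 := by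
    have e1 : 162 * d ^ 4 / m0 ^ 3 * d * N = d ^ 2 * (162 * N ^ (1 + 3 / 8 : ℝ)) := by
      have : N ^ (1 + 3 / 8 : ℝ) * (N ^ (-(1 / 8) : ℝ)) ^ 3 = N := by
        rw [← Real.rpow_natCast, ← Real.rpow_mul hN0.le, ← Real.rpow_add hN0]
        norm_num
      have hp3 : (0 : ℝ) < (N ^ (-(1 / 8) : ℝ)) ^ 3 := by positivity
      rw [hm0, mul_pow, div_mul_eq_mul_div, div_mul_eq_mul_div, div_eq_iff (by positivity)]
      calc _ = 162 * d ^ 5 * N := by ring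
        _ = 162 * d ^ 5 * (N ^ (1 + 3 / 8 : ℝ) * (N ^ (-(1 / 8) : ℝ)) ^ 3) := by rw [this]
        _ = _ := by ring
    have e2 : v ^ 4 * N ^ (1 + 3 / 8 : ℝ) ≤ ρ * a := by
      calc v ^ 4 * N ^ (1 + 3 / 8 : ℝ) ≤ N ^ (1 / 2 - 1 / 50 : ℝ) * a := by
            rw [hvp, ha, ← Real.rpow_add hN0, ← Real.rpow_add hN0]
            apply Real.rpow_le_rpow_of_exponent_le hN1; norm_num
        _ ≤ _ := by gcongr
    have e3 : 8 ^ 4 * N ^ (1 + 3 / 8 : ℝ) ≤ v ^ 4 * N ^ (1 + 3 / 8 : ℝ) := by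
      have := hv8 4
      gcongr
    have e4 : 162 * N ^ (1 + 3 / 8 : ℝ) < ρ * a / 12 := by
      have : 0 < N ^ (1 + 3 / 8 : ℝ) := by positivity
      linarith
    rw [e1]
    calc _ < d ^ 2 * (ρ * a / 12) := by gcongr
      _ = _ := by ring
  have t3 : 162 * N ^ 4 / (a / 12) ^ 3 * m0 * N ≤ ρ * d ^ 2 * a / 12 := by
    have e1 : 162 * N ^ 4 / (a / 12) ^ 3 * m0 * N
        = d * (279936 * N ^ (2 - 1 / 8 + 303 / 10000 : ℝ)) := by
      have : N ^ (2 - 1 / 8 + 303 / 10000 : ℝ) * a ^ 3 = N ^ 5 * N ^ (-(1 / 8) : ℝ) := by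
        rw [ha, ← Real.rpow_natCast, ← Real.rpow_natCast, ← Real.rpow_mul hN0.le,
          ← Real.rpow_add hN0, ← Real.rpow_add hN0]
        congr 1; norm_num
      rw [div_pow, div_div_eq_mul_div, div_mul_eq_mul_div, div_mul_eq_mul_div,
        div_eq_iff (by positivity), hm0]
      calc _ = 279936 * d * (N ^ 5 * N ^ (-(1 / 8) : ℝ)) := by ring
        _ = 279936 * d * (N ^ (2 - 1 / 8 + 303 / 10000 : ℝ) * a ^ 3) := by rw [this]
        _ = _ := by ring
    have e2 : v ^ 8 * N ^ (2 - 1 / 8 + 303 / 10000 : ℝ) ≤ ρ * d * a := by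
      calc v ^ 8 * N ^ (2 - 1 / 8 + 303 / 10000 : ℝ)
          ≤ N ^ (1 / 2 - 1 / 50 : ℝ) * N ^ (1 / 2 - 1 / 50 : ℝ) * a := by
            rw [hvp, ha, ← Real.rpow_add hN0, ← Real.rpow_add hN0, ← Real.rpow_add hN0]
            apply Real.rpow_le_rpow_of_exponent_le hN1; norm_num
        _ ≤ _ := by gcongr
    have e3 : 8 ^ 8 * N ^ (2 - 1 / 8 + 303 / 10000 : ℝ)
        ≤ v ^ 8 * N ^ (2 - 1 / 8 + 303 / 10000 : ℝ) := by
      have := hv8 8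
      gcongr
    have e4 : 279936 * N ^ (2 - 1 / 8 + 303 / 10000 : ℝ) ≤ ρ * d * a / 12 := by
      have : 0 < N ^ (2 - 1 / 8 + 303 / 10000 : ℝ) := by positivity
      linarith
    rw [e1]
    calc _ ≤ d * (ρ * d * a / 12) := by gcongr
      _ = _ := by ring
  rw [t0] at hc
  have t1 : ρ * d ^ 2 * (a / 12) = ρ * d ^ 2 * a / 12 := by ring
  rw [t1] at hc
  have hpos : 0 < ρ * d ^ 2 * a := by positivity
  linarith

lemma popular_subset (X D : Finset ℝ) (N η : ℝ) (hXN : (X.card : ℝ) = N) (hN0 : 0 < N)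
    (hD0 : 0 < (D.card : ℝ)) (hD : ∀ μ ∈ D, N ^ (1 - η) ≤ (rr X μ : ℝ)) :
    N ^ (1 - η) / 2 ≤ ((X.filter (fun b => N ^ (-η) * D.card / 2
      ≤ ((D.filter (fun d => b + d ∈ X)).card : ℝ))).card : ℝ) := by
  classical
  set F : ℝ := N ^ (-η) * D.card / 2 with hF
  set f : ℝ → ℝ := fun b => ((D.filter (fun d => b + d ∈ X)).card : ℝ) with hf
  have h1 : ∑ b ∈ X, f b = ∑ μ ∈ D, (rr X μ : ℝ) := by
    simp only [hf, rr, Finset.card_filter]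
    push_cast
    rw [Finset.sum_comm]
  have h2 : (D.card : ℝ) * N ^ (1 - η) ≤ ∑ μ ∈ D, (rr X μ : ℝ) := by
    rw [← nsmul_eq_mul]; exact Finset.card_nsmul_le_sum _ _ _ hD
  have h3 : ∑ b ∈ X, f b ≤ ∑ b ∈ X, ((if F ≤ f b then (D.card : ℝ) else 0) + F) := by
    apply Finset.sum_le_sum
    intro b _
    have hF0 : 0 ≤ F := by positivity
    split_ifs with hc
    · have : f b ≤ D.card := by
        simp only [hf]
        exact_mod_cast Finset.card_filter_le _ _
      linarith
    · linarith
  rw [Finset.sum_add_distrib, ← Finset.sum_filter] at h3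
  simp only [Finset.sum_const, nsmul_eq_mul, hXN] at h3
  have h4 : N * F = D.card * N ^ (1 - η) / 2 := by
    have : N ^ (1 - η) = N * N ^ (-η) := by
      rw [sub_eq_add_neg, Real.rpow_add hN0, Real.rpow_one]
    rw [this, hF]; ring
  have h5 : (N ^ (1 - η) / 2) * D.card
      ≤ ((X.filter (fun b => F ≤ f b)).card : ℝ) * D.card := by
    linarith
  exact le_of_mul_le_mul_right h5 hD0

lemma IsAddSidon.mono' {K K' : ℝ} {S : Finset ℝ} (h : IsAddSidon K S) (hK : K ≤ K') :
    IsAddSidon K' S := fun mu hmu => (h mu hmu).trans hK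

lemma big_case (A : Finset ℝ) (N : ℝ) (hAN : (A.card : ℝ) = N)
    (hN1 : 1 ≤ N) (hN : 8 ≤ N ^ (1 / 1000 : ℝ)) :
    ∃ S : Finset ℝ, (S ⊆ A ∨ S ⊆ A.image Real.exp) ∧ IsAddSidon 20802 S ∧
      N ^ (1 / 2 + 1 / 10000000 : ℝ) / 8 ≤ (S.card : ℝ) := by
  classical
  have hN0 : 0 < N := by linarith
  set X := A.image Real.exp with hX
  have hXN : (X.card : ℝ) = N := by
    rw [hX, Finset.card_image_of_injective _ Real.exp_injective, hAN]
  set D := (dl X).filter (fun μ => N ^ (1 - 1 / 20000 : ℝ) ≤ (rr X μ : ℝ)) with hD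
  rcases le_total (D.card : ℝ) (N ^ (1 / 2 - 1 / 50 : ℝ)) with hDc | hDc
  · obtain ⟨S, h1, h2, h3⟩ := sidon_real X 10400 N (1 / 20000) 0 (1 / 50) (1 / 10000000) (1 / 1000)
      hN1 hXN.le (by rw [sub_zero, Real.rpow_one, hXN]; linarith) hDc (by norm_num) (by norm_num)
      (by norm_num) hN
    refine ⟨S, Or.inr h1, h2.mono' (by norm_num), ?_⟩
    rwa [sub_zero] at h3
  have hD0 : (0 : ℝ) < D.card := lt_of_lt_of_le (by positivity) hDc
  have hBc := popular_subset X D N (1 / 20000) hXN hN0 hD0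
    (fun μ hμ => (Finset.mem_filter.1 hμ).2)
  set B := X.filter (fun b => N ^ (-(1 / 20000) : ℝ) * D.card / 2
      ≤ ((D.filter (fun d => b + d ∈ X)).card : ℝ)) with hB
  set A' := A.filter (fun a => Real.exp a ∈ B) with hA'
  have hA'c : B.card ≤ A'.card := by
    have : B ⊆ A'.image Real.exp := by
      intro b hb
      have h1 := (Finset.mem_filter.1 hb).1
      obtain ⟨a, ha, rfl⟩ := Finset.mem_image.1 h1
      exact Finset.mem_image_of_mem _ (Finset.mem_filter.2 ⟨ha, hb⟩)
    exact (Finset.card_le_card this).trans Finset.card_image_le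
  have hA'N : (A'.card : ℝ) ≤ N := by
    rw [← hAN]; exact_mod_cast Finset.card_filter_le _ _
  set R0 := (dl A').filter (fun μ => N ^ (1 - 1 / 100 : ℝ) ≤ (rr A' μ : ℝ)) with hR0
  rcases le_total (R0.card : ℝ) (N ^ (1 / 2 - 1 / 50 : ℝ)) with hRc | hRc
  · obtain ⟨S, h1, h2, h3⟩ := sidon_real A' 52 N (1 / 100) (1 / 20000) (1 / 50) (1 / 10000)
      (1 / 1000) hN1 hA'N (hBc.trans (by exact_mod_cast hA'c)) hRc (by norm_num) (by norm_num)
      (by norm_num) hN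
    refine ⟨S, Or.inl (h1.trans (Finset.filter_subset _ _)), h2.mono' (by norm_num), ?_⟩
    refine le_trans ?_ h3
    have : N ^ (1 / 2 + 1 / 10000000 : ℝ) ≤ N ^ (1 / 2 + 1 / 10000 - 1 / 20000 : ℝ) := by
      apply Real.rpow_le_rpow_of_exponent_le hN1; norm_num
    linarith
  exfalso
  refine no_struct X D (R0.image Real.exp) B ?_ N hXN hN1 hN hDc ?_
    (fun b hb => (Finset.mem_filter.1 hb).2) ?_
  · intro r hr
    obtain ⟨μ, _, rfl⟩ := Finset.mem_image.1 hr
    exact Real.exp_pos μ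
  · rwa [Finset.card_image_of_injective _ Real.exp_injective]
  · intro r hr
    obtain ⟨μ, hμ, rfl⟩ := Finset.mem_image.1 hr
    refine (Finset.mem_filter.1 hμ).2.trans ?_
    have : rr A' μ ≤ (B.filter (fun b => Real.exp μ * b ∈ B)).card := by
      unfold rr
      apply Finset.card_le_card_of_injOn Real.exp
      · intro y hy
        obtain ⟨h1, h2⟩ := Finset.mem_filter.1 (Finset.mem_coe.1 hy)
        refine Finset.mem_coe.2 (Finset.mem_filter.2 ⟨(Finset.mem_filter.1 h1).2, ?_⟩)
        rw [← Real.exp_add, add_comm]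
        exact (Finset.mem_filter.1 h2).2
      · exact Real.exp_injective.injOn
    exact_mod_cast this

theorem stmt9 :
    ∃ c K c0 : ℝ, 0 < c ∧ 1 ≤ K ∧ 0 < c0 ∧
      ∀ A : Finset ℝ,
        ∃ S : Finset ℝ,
          (S ⊆ A ∨ S ⊆ A.image Real.exp) ∧ IsAddSidon K S ∧
          c0 * (A.card : ℝ) ^ ((1 : ℝ) / 2 + c) ≤ S.card := by
  obtain ⟨C, hC⟩ : ∃ C : ℝ, C = (8 : ℝ) ^ ((1000 : ℝ) * (1 / 2 + 1 / 10000000)) := ⟨_, rfl⟩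
  have hC8 : 8 ≤ C := by
    rw [hC]
    calc (8 : ℝ) = 8 ^ (1 : ℝ) := (Real.rpow_one 8).symm
      _ ≤ _ := Real.rpow_le_rpow_of_exponent_le (by norm_num) (by norm_num)
  have hC0 : 0 < C := by linarith
  refine ⟨1 / 10000000, 20802, C⁻¹, by norm_num, by norm_num, by positivity, ?_⟩
  intro A
  rcases A.eq_empty_or_nonempty with rfl | ⟨x, hx⟩
  · refine ⟨∅, Or.inl (Finset.Subset.refl _), ?_, ?_⟩
    · intro mu _
      rw [subPair_eq]
      simp [rr]
    · rw [Finset.card_empty, Nat.cast_zero, Real.zero_rpow (by norm_num)]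
      simp
  have hA1 : (1 : ℝ) ≤ A.card := by exact_mod_cast Finset.card_pos.2 ⟨x, hx⟩
  rcases le_total 8 ((A.card : ℝ) ^ (1 / 1000 : ℝ)) with h8 | h8
  · obtain ⟨S, h1, h2, h3⟩ := big_case A A.card rfl hA1 h8
    refine ⟨S, h1, h2, le_trans ?_ h3⟩
    have : C⁻¹ ≤ 8⁻¹ := inv_anti₀ (by norm_num) hC8
    have h4 := mul_le_mul_of_nonneg_right this
      (by positivity : 0 ≤ (A.card : ℝ) ^ ((1 : ℝ) / 2 + 1 / 10000000))
    linarith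
  · refine ⟨{x}, Or.inl (by simpa using hx), ?_, ?_⟩
    · intro mu _
      rw [subPair_eq]
      have h1 : rr {x} mu ≤ 1 := by
        unfold rr
        exact (Finset.card_filter_le _ _).trans (by simp)
      have h2 : (rr {x} mu : ℝ) ≤ 1 := by exact_mod_cast h1
      linarith
    · have h1 : (A.card : ℝ) ^ ((1 : ℝ) / 2 + 1 / 10000000) ≤ C := by
        have h2 := Real.rpow_le_rpow (by positivity) h8
          (by norm_num : (0 : ℝ) ≤ (1000 : ℝ) * (1 / 2 + 1 / 10000000))
        rw [← Real.rpow_mul (by positivity), ← hC] at h2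
        convert h2 using 2
        norm_num
      rw [Finset.card_singleton, Nat.cast_one, inv_mul_le_iff₀ hC0]
      linarith
end
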